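/- arXiv:1904.01919 — 2 statements merged into one kernel-verified Lean document; each statement's English description precedes it below -/
import Mathlib

section
/- Suppose 1 < p ≤ 2 and 0 < s < 1, let p' be the conjugate exponent of p, and let g be holomorphic on the unit disc D. Then: (i) if the Volterra operator T_g maps the Besov space B^p into Q_s, then g ∈ Q_{s,log,1/p'}; (ii) if α > 1/2 and g ∈ Q_{s,log,α}, then T_g maps B^p into Q_s. -/
open MeasureTheory Metric Complex Real Filter Set

noncomputable section

/-- `f` is holomorphic on the open unit disc. -/
def HolOn (f : ℂ → ℂ) : Prop := DifferentiableOn ℂ f (Metric.ball (0:ℂ) 1)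

/-- The normalized Lebesgue area measure on `ℂ` (so the unit disc has total mass 1). -/
def dA : Measure ℂ := (ENNReal.ofReal π)⁻¹ • volume

/-- Bounded holomorphic functions on the unit disc. -/
def Hinf : Set (ℂ → ℂ) :=
  {f | HolOn f ∧ ∃ C : ℝ, ∀ z ∈ Metric.ball (0:ℂ) 1, ‖f z‖ ≤ C}

/-- The Bloch space. -/
def Bloch : Set (ℂ → ℂ) :=
  {f | HolOn f ∧ ∃ C : ℝ, ∀ z ∈ Metric.ball (0:ℂ) 1,
      (1 - ‖z‖ ^ 2) * ‖deriv f z‖ ≤ C}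

/-- The little Bloch space: `(1-|z|²)|f'(z)| → 0` as `|z| → 1⁻`. -/
def littleBloch : Set (ℂ → ℂ) :=
  {f | HolOn f ∧ ∀ ε : ℝ, 0 < ε → ∃ r : ℝ, r < 1 ∧ ∀ z ∈ Metric.ball (0:ℂ) 1,
      r < ‖z‖ → (1 - ‖z‖ ^ 2) * ‖deriv f z‖ < ε}

/-- The `α`-logarithmic Bloch space. -/
def BlochLog (α : ℝ) : Set (ℂ → ℂ) :=
  {f | HolOn f ∧ ∃ C : ℝ, ∀ z ∈ Metric.ball (0:ℂ) 1,
      (1 - ‖z‖ ^ 2) * (Real.log (2 / (1 - ‖z‖ ^ 2))) ^ α *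
        ‖deriv f z‖ ≤ C}

/-- The Besov space `B¹`: holomorphic `f` with `∫_D |f''| dA < ∞`. -/
def Besov1 : Set (ℂ → ℂ) :=
  {f | HolOn f ∧ ∫⁻ z in Metric.ball (0:ℂ) 1,
      ENNReal.ofReal (‖deriv (deriv f) z‖) ∂dA < ⊤}

/-- The Besov space `Bᵖ` (`1 < p < ∞`): `∫_D (1-|z|)^(p-2) |f'(z)|^p dA(z) < ∞`. -/
def Besov (p : ℝ) : Set (ℂ → ℂ) :=
  {f | HolOn f ∧ ∫⁻ z in Metric.ball (0:ℂ) 1,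
      ENNReal.ofReal ((1 - ‖z‖) ^ (p - 2) * ‖deriv f z‖ ^ p) ∂dA < ⊤}

open scoped Classical in
/-- The Besov space `Bᵖ` for all `1 ≤ p < ∞` (with the special definition at `p = 1`). -/
def BesovFull (p : ℝ) : Set (ℂ → ℂ) := if p = 1 then Besov1 else Besov p

/-- The Möbius transformation `φ_a(z) = (a-z)/(1 - conj a · z)`. -/
def phi (a z : ℂ) : ℂ := (a - z) / (1 - (starRingEnd ℂ) a * z)

/-- The space `Q_s`. -/
def Qs (s : ℝ) : Set (ℂ → ℂ) :=
  {f | HolOn f ∧ ⨆ a ∈ Metric.ball (0:ℂ) 1, ∫⁻ z in Metric.ball (0:ℂ) 1,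
      ENNReal.ofReal (‖deriv f z‖ ^ 2 *
        (1 - ‖phi a z‖ ^ 2) ^ s) ∂dA < ⊤}

/-- The space `Q_{s,log,α}`. -/
def QsLog (s α : ℝ) : Set (ℂ → ℂ) :=
  {f | HolOn f ∧ ⨆ a ∈ Metric.ball (0:ℂ) 1,
      (ENNReal.ofReal ((Real.log (2 / (1 - ‖a‖))) ^ (2 * α)) *
        ∫⁻ z in Metric.ball (0:ℂ) 1,
          ENNReal.ofReal (‖deriv f z‖ ^ 2 *
            (1 - ‖phi a z‖ ^ 2) ^ s) ∂dA) < ⊤}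

/-- The Volterra operator `T_g(f)(z) = ∫_0^z g'(ξ) f(ξ) dξ` (along the segment from 0 to z). -/
def Tg (g f : ℂ → ℂ) : ℂ → ℂ :=
  fun z => z * ∫ t in (0:ℝ)..1, deriv g ((t : ℂ) * z) * f ((t : ℂ) * z)

/-- The companion operator `I_g(f)(z) = ∫_0^z g(ξ) f'(ξ) dξ` (along the segment from 0 to z). -/
def Ig (g f : ℂ → ℂ) : ℂ → ℂ :=
  fun z => z * ∫ t in (0:ℝ)..1, g ((t : ℂ) * z) * deriv f ((t : ℂ) * z)

/-- The multiplication operator `M_g(f) = g · f`. -/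
def Mg (g f : ℂ → ℂ) : ℂ → ℂ := fun z => g z * f z

/-- `T` maps `X` into `Y`. -/
def MapsInto (T : (ℂ → ℂ) → (ℂ → ℂ)) (X Y : Set (ℂ → ℂ)) : Prop :=
  ∀ f ∈ X, T f ∈ Y

/-- The Hardy space `H^q`. -/
def Hardy (q : ℝ) : Set (ℂ → ℂ) :=
  {f | HolOn f ∧ ∃ C : ℝ, ∀ r : ℝ, 0 < r → r < 1 →
      (1 / (2 * π)) * ∫ t in (0:ℝ)..(2 * π),
        ‖f ((r : ℂ) * Complex.exp ((t : ℂ) * Complex.I))‖ ^ q ≤ C}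

/-- An inner function: bounded holomorphic with radial boundary values of modulus 1 a.e. -/
def IsInner (g : ℂ → ℂ) : Prop :=
  g ∈ Hinf ∧ ∀ᵐ t : ℝ ∂(volume.restrict (Set.Ioc (0:ℝ) (2 * π))),
    Filter.Tendsto (fun r : ℝ => ‖g ((r : ℂ) * Complex.exp ((t : ℂ) * Complex.I))‖)
      (nhdsWithin 1 (Set.Iio 1)) (nhds 1)

/-- `X` has the f-property (division by inner functions). -/
def FProperty (X : Set (ℂ → ℂ)) : Prop :=
  ∀ h ∈ X, ∀ g : ℂ → ℂ, IsInner g →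
    (fun z => h z / g z) ∈ Hardy 1 → (fun z => h z / g z) ∈ X

/-- The space of multipliers `M(X,Y)`. -/
def Mult (X Y : Set (ℂ → ℂ)) : Set (ℂ → ℂ) :=
  {g | HolOn g ∧ ∀ f ∈ X, (fun z => g z * f z) ∈ Y}

end

section Helpers

open MeasureTheory Metric Complex Real Filter Set
open scoped ENNReal


theorem lint_dA (S : Set ℂ) (f : ℂ → ℝ≥0∞) :
    ∫⁻ z in S, f z ∂dA = (ENNReal.ofReal π)⁻¹ * ∫⁻ z in S, f z := by
  rw [dA, Measure.restrict_smul, lintegral_smul_measure, smul_eq_mul]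

theorem polar_ball (f : ℂ → ℝ≥0∞) (hf : Measurable f) :
    ∫⁻ z in ball (0:ℂ) 1, f z =
      ∫⁻ ρ in Ioo (0:ℝ) 1, ∫⁻ θ in Ioo (-π) π, ENNReal.ofReal ρ * f (circleMap 0 ρ θ) := by
  rw [← lintegral_indicator measurableSet_ball, ← Complex.lintegral_comp_polarCoord_symm]
  have hm : Measurable fun p : ℝ × ℝ => ENNReal.ofReal p.1 * f (circleMap 0 p.1 p.2) := by
    apply Measurable.mul (by fun_prop)
    apply hf.comp
    unfold circleMap
    fun_prop
  change ∫⁻ p in Ioi (0:ℝ) ×ˢ Ioo (-π) π, ENNReal.ofReal p.1 •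
      (ball (0:ℂ) 1).indicator f (Complex.polarCoord.symm p) = _
  have h2 : ∫⁻ p in Ioi (0:ℝ) ×ˢ Ioo (-π) π, ENNReal.ofReal p.1 •
      (ball (0:ℂ) 1).indicator f (Complex.polarCoord.symm p) =
      ∫⁻ p in Ioo (0:ℝ) 1 ×ˢ Ioo (-π) π, ENNReal.ofReal p.1 * f (circleMap 0 p.1 p.2) := by
    have e : ∀ p : ℝ × ℝ, Complex.polarCoord.symm p = circleMap 0 p.1 p.2 := by
      intro p
      rw [Complex.polarCoord_symm_apply, circleMap, zero_add, Complex.exp_mul_I]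
      push_cast; rfl
    simp only [e]
    rw [← lintegral_indicator (measurableSet_Ioi.prod measurableSet_Ioo),
      ← lintegral_indicator (measurableSet_Ioo.prod measurableSet_Ioo)]
    congr 1
    ext p
    by_cases h : p ∈ Ioi (0:ℝ) ×ˢ Ioo (-π) π
    · by_cases h1 : p.1 < 1
      · have : p ∈ Ioo (0:ℝ) 1 ×ˢ Ioo (-π) π := ⟨⟨h.1, h1⟩, h.2⟩
        rw [indicator_of_mem h, indicator_of_mem this, indicator_of_mem, smul_eq_mul]
        have h0 : (0:ℝ) < p.1 := h.1
        simp [circleMap, abs_of_pos h0, h1]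
      · have : p ∉ Ioo (0:ℝ) 1 ×ˢ Ioo (-π) π := fun hh => h1 hh.1.2
        rw [indicator_of_mem h, indicator_of_notMem this, indicator_of_notMem, smul_zero]
        have h0 : (0:ℝ) < p.1 := h.1
        simpa [circleMap, abs_of_pos h0] using h1
    · have : p ∉ Ioo (0:ℝ) 1 ×ˢ Ioo (-π) π := fun hh => h ⟨hh.1.1, hh.2⟩
      rw [indicator_of_notMem h, indicator_of_notMem this]
  rw [h2, Measure.volume_eq_prod, ← Measure.prod_restrict, lintegral_prod _ hm.aemeasurable]

theorem circle_lower (r θ : ℝ) (h0 : 0 ≤ r) (h1 : r < 1) (hθ : |θ| ≤ π) :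
    ((1 - r) + |θ|) / 10 ≤ ‖1 - circleMap 0 r θ‖ := by
  have e : ‖1 - circleMap 0 r θ‖ ^ 2 = (1 - r) ^ 2 + 2 * r * (1 - Real.cos θ) := by
    rw [← Complex.normSq_eq_norm_sq, Complex.normSq_apply]
    simp [circleMap, Complex.exp_ofReal_mul_I_re, Complex.exp_ofReal_mul_I_im]
    nlinarith [Real.sin_sq_add_cos_sq θ]
  have hc := Real.cos_le_one_sub_mul_cos_sq hθ
  have hpi := Real.pi_lt_d2
  have hpi3 := Real.pi_gt_three
  apply le_of_sq_le_sq _ (norm_nonneg _)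
  rw [e]
  have ht : |θ| ^ 2 = θ ^ 2 := sq_abs θ
  have hpp : π ^ 2 ≤ 10 := by nlinarith
  have hc2 : 1 / 5 * θ ^ 2 ≤ 1 - Real.cos θ := by
    have : 1 / 5 ≤ 2 / π ^ 2 := by
      rw [div_le_div_iff₀ (by norm_num) (by positivity)]; linarith
    nlinarith [sq_nonneg θ]
  have hθ2 : θ ^ 2 ≤ 10 := by
    rw [← ht]; nlinarith [abs_nonneg θ]
  have hs : ((1 - r) + |θ|) ^ 2 ≤ 2 * ((1 - r) ^ 2 + θ ^ 2) := by
    rw [← ht]; nlinarith [sq_nonneg (1 - r - |θ|)]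
  rcases le_total (1/2) r with h | h
  · have : 2 * r * (1 - Real.cos θ) ≥ 1 / 5 * θ ^ 2 := by nlinarith [sq_nonneg θ]
    nlinarith [sq_nonneg θ, sq_nonneg (1 - r)]
  · have : 2 * r * (1 - Real.cos θ) ≥ 0 := by
      have := Real.cos_le_one θ
      apply mul_nonneg <;> linarith
    have h3 : (1 - r) ^ 2 ≥ 1/4 := by nlinarith
    nlinarith

theorem lint_Ioi_shift (q δ : ℝ) (hq : 1 < q) (hδ : 0 < δ) :
    ∫⁻ t in Ioi δ, ENNReal.ofReal (t ^ (-q)) = ENNReal.ofReal (δ ^ (1 - q) / (q - 1)) := by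
  rw [← ofReal_integral_eq_lintegral_ofReal (integrableOn_Ioi_rpow_of_lt (by linarith) hδ),
    integral_Ioi_rpow_of_lt (by linarith) hδ]
  · congr 1
    rw [show -q + 1 = 1 - q by ring, show 1 - q = -(q - 1) by ring, neg_div_neg_eq]
  · filter_upwards [self_mem_ae_restrict measurableSet_Ioi] with t ht
    have : 0 < t := hδ.trans ht
    positivity

theorem circle_est (q r : ℝ) (hq : 1 < q) (h0 : 0 ≤ r) (h1 : r < 1) :
    ∫⁻ θ in Ioo (-π) π, ENNReal.ofReal (‖1 - circleMap 0 r θ‖ ^ (-q)) ≤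
      ENNReal.ofReal (2 * 10 ^ q / (q - 1)) * ENNReal.ofReal ((1 - r) ^ (1 - q)) := by
  set δ := 1 - r with hδ
  have hδ0 : 0 < δ := by linarith
  set F : ℝ → ℝ≥0∞ := fun t => ENNReal.ofReal (10 ^ q) * ENNReal.ofReal (t ^ (-q)) with hF
  have hFm : Measurable F := by fun_prop
  have hI : ∫⁻ t in Ioi δ, F t = ENNReal.ofReal (10 ^ q * (δ ^ (1 - q) / (q - 1))) := by
    rw [hF, lintegral_const_mul _ (by fun_prop), lint_Ioi_shift q δ hq hδ0,
      ENNReal.ofReal_mul (by positivity)]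
  have hA : ∫⁻ θ in Ioi (0:ℝ), F (δ + θ) = ∫⁻ t in Ioi δ, F t := by
    have := (measurePreserving_add_left (volume : Measure ℝ) δ).setLIntegral_comp_preimage
      (measurableSet_Ioi (a := δ)) hFm
    rw [← this]; congr 2; ext x; simp
  have hB : ∫⁻ θ in Iic (0:ℝ), F (δ - θ) = ∫⁻ t in Ioi δ, F t := by
    have := (Measure.measurePreserving_sub_left (volume : Measure ℝ) δ).setLIntegral_comp_preimage
      (measurableSet_Ici (a := δ)) hFm
    rw [setLIntegral_congr Ioi_ae_eq_Ici, ← this]; congr 2; ext x; simp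
  have key : ∀ θ ∈ Ioo (-π) π, ENNReal.ofReal (‖1 - circleMap 0 r θ‖ ^ (-q)) ≤ F (δ + |θ|) := by
    intro θ hθ
    have hl := circle_lower r θ h0 h1 (abs_le.2 ⟨hθ.1.le, hθ.2.le⟩)
    rw [hF]; dsimp only
    rw [← ENNReal.ofReal_mul (by positivity)]
    apply ENNReal.ofReal_le_ofReal
    have hp : 0 < δ + |θ| := by positivity
    calc ‖1 - circleMap 0 r θ‖ ^ (-q) ≤ ((δ + |θ|) / 10) ^ (-q) :=
          Real.rpow_le_rpow_of_nonpos (by positivity) hl (by linarith)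
      _ = 10 ^ q * (δ + |θ|) ^ (-q) := by
          rw [Real.div_rpow hp.le (by norm_num), Real.rpow_neg (by norm_num : (0:ℝ) ≤ 10)]
          field_simp
  calc ∫⁻ θ in Ioo (-π) π, ENNReal.ofReal (‖1 - circleMap 0 r θ‖ ^ (-q))
      ≤ ∫⁻ θ in Ioo (-π) π, F (δ + |θ|) := setLIntegral_mono' measurableSet_Ioo key
    _ ≤ ∫⁻ θ in Iic 0 ∪ Ioi 0, F (δ + |θ|) := lintegral_mono_set (by rw [Iic_union_Ioi]; simp)
    _ ≤ (∫⁻ θ in Iic 0, F (δ + |θ|)) + ∫⁻ θ in Ioi 0, F (δ + |θ|) := lintegral_union_le _ _ _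
    _ = (∫⁻ θ in Iic (0:ℝ), F (δ - θ)) + ∫⁻ θ in Ioi (0:ℝ), F (δ + θ) := by
        congr 1
        · apply setLIntegral_congr_fun measurableSet_Iic
          intro x hx; simp only; rw [abs_of_nonpos hx, sub_eq_add_neg]
        · apply setLIntegral_congr_fun measurableSet_Ioi
          intro x hx; simp only; rw [abs_of_pos hx]
    _ = _ := by
        rw [hA, hB, hI, ← ENNReal.ofReal_add, ← ENNReal.ofReal_mul]
        · congr 1; ring
        all_goals (have : 0 < q - 1 := by linarith); positivity

theorem FR (q : ℝ) (hq : 1 < q) (w : ℂ) (hw : ‖w‖ < 1) (W : ℝ → ℝ≥0∞) (hW : Measurable W) :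
    ∫⁻ u in ball (0:ℂ) 1, W ‖u‖ * ENNReal.ofReal (‖1 - w * (starRingEnd ℂ) u‖ ^ (-q)) ≤
      ENNReal.ofReal (2 * 10 ^ q / (q - 1)) *
        ∫⁻ ρ in Ioo (0:ℝ) 1, W ρ * ENNReal.ofReal ((1 - ‖w‖ * ρ) ^ (1 - q)) := by
  set c : Circle := Circle.exp (Complex.arg w) with hc
  have hcw : w = ‖w‖ * (c : ℂ) := by
    rw [hc, Circle.coe_exp, Complex.norm_mul_exp_arg_mul_I]
  have hcc : (c : ℂ) * (starRingEnd ℂ) (c : ℂ) = 1 := by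
    rw [Complex.mul_conj, Complex.normSq_eq_norm_sq, Circle.norm_coe]; simp
  have hconj : Continuous (starRingEnd ℂ) := Complex.continuous_conj
  have hm : Measurable fun u : ℂ => W ‖u‖ * ENNReal.ofReal (‖1 - w * (starRingEnd ℂ) u‖ ^ (-q)) := by
    have := hconj.measurable
    fun_prop
  have hm2 : Measurable fun u : ℂ => W ‖u‖ * ENNReal.ofReal (‖1 - ‖w‖ * u‖ ^ (-q)) := by
    fun_prop
  have h1 := ((rotation c).measurePreserving).setLIntegral_comp_preimage
      (measurableSet_ball (x := (0:ℂ)) (ε := 1)) hm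
  rw [← h1]
  have hpre : (rotation c) ⁻¹' ball (0:ℂ) 1 = ball 0 1 := by
    ext x; rw [mem_preimage, mem_ball_zero_iff, mem_ball_zero_iff, LinearIsometryEquiv.norm_map]
  rw [hpre]
  have e : ∀ u : ℂ, W ‖rotation c u‖ *
      ENNReal.ofReal (‖1 - w * (starRingEnd ℂ) (rotation c u)‖ ^ (-q)) =
      W ‖u‖ * ENNReal.ofReal (‖1 - ‖w‖ * u‖ ^ (-q)) := by
    intro u
    rw [LinearIsometryEquiv.norm_map, rotation_apply, map_mul]
    congr 3
    rw [← Complex.norm_conj (1 - ‖w‖ * u)]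
    congr 1
    rw [map_sub, map_mul, map_one, Complex.conj_ofReal]
    congr 1
    conv_lhs => rw [hcw]
    linear_combination (‖w‖ : ℂ) * (starRingEnd ℂ) u * hcc
  simp_rw [e]
  rw [polar_ball _ hm2, ← lintegral_const_mul _ (by fun_prop)]
  apply setLIntegral_mono' measurableSet_Ioo
  intro ρ hρ
  have e2 : ∀ θ, ENNReal.ofReal ρ * (W ‖circleMap 0 ρ θ‖ *
      ENNReal.ofReal (‖1 - ‖w‖ * circleMap 0 ρ θ‖ ^ (-q))) =
      (ENNReal.ofReal ρ * W ρ) * ENNReal.ofReal (‖1 - circleMap 0 (‖w‖ * ρ) θ‖ ^ (-q)) := by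
    intro θ
    rw [mul_assoc]
    congr 3
    · simp [circleMap, abs_of_pos hρ.1]
    · simp [circleMap, mul_assoc]
  simp_rw [e2]
  have hcm : Measurable fun θ : ℝ => ENNReal.ofReal (‖1 - circleMap 0 (‖w‖ * ρ) θ‖ ^ (-q)) := by
    unfold circleMap; fun_prop
  rw [lintegral_const_mul _ hcm]
  have h3 := circle_est q (‖w‖ * ρ) hq (by have := hρ.1; positivity)
    (by nlinarith [hρ.1, hρ.2, norm_nonneg w])
  calc _ ≤ (1 * W ρ) * (ENNReal.ofReal (2 * 10 ^ q / (q - 1)) *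
        ENNReal.ofReal ((1 - ‖w‖ * ρ) ^ (1 - q))) := by
        gcongr
        rw [← ENNReal.ofReal_one]; exact ENNReal.ofReal_le_ofReal hρ.2.le
    _ = _ := by ring


theorem lint_rpow_Ioc (e δ : ℝ) (he : -1 < e) (hδ : 0 < δ) :
    ∫⁻ x in Ioc (0:ℝ) δ, ENNReal.ofReal (x ^ e) = ENNReal.ofReal (δ ^ (e + 1) / (e + 1)) := by
  have hi := (intervalIntegral.intervalIntegrable_rpow' (a := 0) (b := δ) he)
  rw [intervalIntegrable_iff_integrableOn_Ioc_of_le hδ.le] at hi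
  rw [← ofReal_integral_eq_lintegral_ofReal hi, ← intervalIntegral.integral_of_le hδ.le,
    integral_rpow (Or.inl he), Real.zero_rpow (by linarith), sub_zero]
  filter_upwards [self_mem_ae_restrict measurableSet_Ioc] with t ht
  have : 0 < t := ht.1
  positivity

theorem lint_inv_Ioc (δ : ℝ) (hδ : 0 < δ) (h1 : δ ≤ 1) :
    ∫⁻ x in Ioc δ 1, ENNReal.ofReal (x⁻¹) = ENNReal.ofReal (Real.log (1 / δ)) := by
  have h0 : (0:ℝ) ∉ uIcc δ 1 := by
    rw [uIcc_of_le h1]; intro h; linarith [h.1]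
  have hi : IntervalIntegrable (fun x : ℝ => x⁻¹) volume δ 1 :=
    intervalIntegral.intervalIntegrable_inv (fun x hx => by rintro rfl; exact h0 hx) continuousOn_id
  rw [intervalIntegrable_iff_integrableOn_Ioc_of_le h1] at hi
  rw [← ofReal_integral_eq_lintegral_ofReal hi, ← intervalIntegral.integral_of_le h1,
    integral_inv h0]
  filter_upwards [self_mem_ae_restrict measurableSet_Ioc] with t ht
  have : 0 < t := hδ.trans ht.1
  positivity

theorem flip01 (F : ℝ → ℝ≥0∞) (hF : Measurable F) :
    ∫⁻ ρ in Ioo (0:ℝ) 1, F (1 - ρ) = ∫⁻ x in Ioo (0:ℝ) 1, F x := by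
  have := (Measure.measurePreserving_sub_left (volume : Measure ℝ) 1).setLIntegral_comp_preimage
      (measurableSet_Ioo (a := (0:ℝ)) (b := 1)) hF
  rw [← this]; congr 2; ext x; simp

theorem norm_lower (w u : ℂ) (hw : ‖w‖ < 1) (hu : ‖u‖ < 1) :
    0 < ‖1 - w * (starRingEnd ℂ) u‖ ∧ ‖1 - w * (starRingEnd ℂ) u‖ ≤ 2 := by
  have h : ‖w * (starRingEnd ℂ) u‖ < 1 := by
    rw [norm_mul, Complex.norm_conj]; nlinarith [norm_nonneg w, norm_nonneg u]
  constructor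
  · have := norm_sub_norm_le (1:ℂ) (w * (starRingEnd ℂ) u)
    rw [norm_one] at this; linarith
  · have := norm_sub_le (1:ℂ) (w * (starRingEnd ℂ) u)
    rw [norm_one] at this; linarith

theorem K1 (s : ℝ) (hs0 : 0 < s) (hs1 : s < 1) : ∃ C : ℝ≥0∞, C ≠ ⊤ ∧ ∀ w : ℂ, ‖w‖ < 1 →
    ∫⁻ u in ball (0:ℂ) 1, ENNReal.ofReal ((1 - ‖u‖ ^ 2) ^ (-s) *
      ‖1 - w * (starRingEnd ℂ) u‖ ^ (2 * s - 2)) ≤ C := by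
  set q : ℝ := 1 + (1 - s) ^ 2 with hq
  have hq1 : 1 < q := by nlinarith
  set W : ℝ → ℝ≥0∞ := fun ρ => ENNReal.ofReal (2 * (1 - ρ) ^ (-s)) with hW
  have hWm : Measurable W := by fun_prop
  have he : -1 < -s + 1 - q := by nlinarith
  refine ⟨ENNReal.ofReal (2 * 10 ^ q / (q - 1)) * ∫⁻ ρ in Ioo (0:ℝ) 1,
    ENNReal.ofReal 2 * ENNReal.ofReal ((1 - ρ) ^ (-s + 1 - q)), ?_, ?_⟩
  · apply ENNReal.mul_ne_top ENNReal.ofReal_ne_top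
    rw [flip01 (fun x => ENNReal.ofReal 2 * ENNReal.ofReal (x ^ (-s + 1 - q))) (by fun_prop),
      setLIntegral_congr Ioo_ae_eq_Ioc, lintegral_const_mul _ (by fun_prop),
      lint_rpow_Ioc _ _ he one_pos]
    exact ENNReal.mul_ne_top ENNReal.ofReal_ne_top ENNReal.ofReal_ne_top
  · intro w hw
    calc _ ≤ ∫⁻ u in ball (0:ℂ) 1, W ‖u‖ * ENNReal.ofReal (‖1 - w * (starRingEnd ℂ) u‖ ^ (-q)) := by
          apply setLIntegral_mono' measurableSet_ball
          intro u hu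
          rw [mem_ball_zero_iff] at hu
          obtain ⟨hn0, hn2⟩ := norm_lower w u hw hu
          set N := ‖1 - w * (starRingEnd ℂ) u‖
          have h1u : 0 < 1 - ‖u‖ := by linarith
          rw [hW]; dsimp only
          rw [← ENNReal.ofReal_mul (by positivity)]
          apply ENNReal.ofReal_le_ofReal
          have e1 : (1 - ‖u‖ ^ 2) ^ (-s) ≤ (1 - ‖u‖) ^ (-s) :=
            Real.rpow_le_rpow_of_nonpos h1u (by nlinarith [norm_nonneg u]) (by linarith)
          have e2 : N ^ (2 * s - 2) ≤ 2 * N ^ (-q) := by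
            have : N ^ (2 * s - 2) = N ^ (s ^ 2) * N ^ (-q) := by
              rw [← Real.rpow_add hn0]; congr 1; rw [hq]; ring
            rw [this]
            gcongr
            calc N ^ (s ^ 2) ≤ 2 ^ (s ^ 2) := Real.rpow_le_rpow hn0.le hn2 (by positivity)
              _ ≤ 2 ^ (1:ℝ) := Real.rpow_le_rpow_of_exponent_le (by norm_num) (by nlinarith)
              _ = 2 := by norm_num
          calc _ ≤ (1 - ‖u‖) ^ (-s) * (2 * N ^ (-q)) := by gcongr
            _ = _ := by ring
      _ ≤ _ := FR q hq1 w hw W hWm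
      _ ≤ _ := by
          refine mul_le_mul' le_rfl ?_
          apply setLIntegral_mono' measurableSet_Ioo
          intro ρ hρ
          rw [hW]; dsimp only
          have h1 : 0 < 1 - ρ := by linarith [hρ.2]
          rw [← ENNReal.ofReal_mul (by positivity), ← ENNReal.ofReal_mul (by positivity)]
          apply ENNReal.ofReal_le_ofReal
          rw [add_sub_assoc, Real.rpow_add h1, mul_assoc]
          gcongr ?_ * (?_ * ?_)
          exact Real.rpow_le_rpow_of_nonpos h1 (by nlinarith [hρ.1]) (by linarith)

/-- the logarithm weight -/
noncomputable def LL (a : ℂ) : ℝ := Real.log (2 / (1 - ‖a‖))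

theorem LL_ge (a : ℂ) (ha : ‖a‖ < 1) : Real.log 2 ≤ LL a := by
  apply Real.log_le_log (by norm_num)
  rw [le_div_iff₀ (by linarith)]; linarith [norm_nonneg a]

theorem LL_pos (a : ℂ) (ha : ‖a‖ < 1) : 0 < LL a :=
  (Real.log_pos (by norm_num)).trans_le (LL_ge a ha)

theorem K2 (p : ℝ) (hp1 : 1 < p) (hp2 : p ≤ 2) : ∃ C : ℝ, 0 < C ∧ ∀ w : ℂ, ‖w‖ < 1 →
    ∫⁻ u in ball (0:ℂ) 1, ENNReal.ofReal ((1 - ‖u‖) ^ (p - 2) *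
      ‖1 - w * (starRingEnd ℂ) u‖ ^ (-p)) ≤ ENNReal.ofReal (C * LL w) := by
  have hp0 : 0 < p - 1 := by linarith
  have hl2 : 0 < Real.log 2 := Real.log_pos (by norm_num)
  refine ⟨(2 * 10 ^ p / (p - 1)) * (1 / ((p - 1) * Real.log 2) + 1), by positivity, ?_⟩
  intro w hw
  set W : ℝ → ℝ≥0∞ := fun ρ => ENNReal.ofReal ((1 - ρ) ^ (p - 2)) with hW
  have hWm : Measurable W := by fun_prop
  have hL := LL_pos w hw
  have hL2 := LL_ge w hw
  set δ := 1 - ‖w‖ with hδ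
  have hδ0 : 0 < δ := by linarith
  have hδ1 : δ ≤ 1 := by linarith [norm_nonneg w]
  calc _ = ∫⁻ u in ball (0:ℂ) 1, W ‖u‖ * ENNReal.ofReal (‖1 - w * (starRingEnd ℂ) u‖ ^ (-p)) := by
        apply setLIntegral_congr_fun measurableSet_ball
        intro u hu
        rw [mem_ball_zero_iff] at hu
        have h1u : 0 < 1 - ‖u‖ := by linarith
        rw [hW]; dsimp only
        rw [← ENNReal.ofReal_mul (by positivity)]
    _ ≤ _ := FR p hp1 w hw W hWm
    _ ≤ ENNReal.ofReal (2 * 10 ^ p / (p - 1)) *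
        ENNReal.ofReal ((1 / ((p - 1) * Real.log 2) + 1) * LL w) := by
        refine mul_le_mul' le_rfl ?_
        set F : ℝ → ℝ≥0∞ := fun x => ENNReal.ofReal (x ^ (p - 2) * (1 - ‖w‖ * (1 - x)) ^ (1 - p))
          with hF
        calc _ = ∫⁻ ρ in Ioo (0:ℝ) 1, F (1 - ρ) := by
              apply setLIntegral_congr_fun measurableSet_Ioo
              intro ρ hρ
              have : 0 < 1 - ρ := by linarith [hρ.2]
              simp only [hW, hF]
              rw [← ENNReal.ofReal_mul (by positivity), sub_sub_cancel]
          _ = ∫⁻ x in Ioo (0:ℝ) 1, F x := flip01 F (by fun_prop)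
          _ ≤ ∫⁻ x in Ioc (0:ℝ) δ ∪ Ioc δ 1, F x := by
              apply lintegral_mono_set
              rw [Ioc_union_Ioc_eq_Ioc hδ0.le hδ1]; exact Ioo_subset_Ioc_self
          _ ≤ _ := lintegral_union_le _ _ _
          _ ≤ (∫⁻ x in Ioc (0:ℝ) δ, ENNReal.ofReal (δ ^ (1 - p)) * ENNReal.ofReal (x ^ (p - 2))) +
              ∫⁻ x in Ioc δ 1, ENNReal.ofReal (x⁻¹) := by
              gcongr ?_ + ?_
              · apply setLIntegral_mono' measurableSet_Ioc
                intro x hx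
                rw [← ENNReal.ofReal_mul (by positivity)]
                apply ENNReal.ofReal_le_ofReal
                rw [mul_comm]
                have := hx.1
                gcongr ?_ * ?_
                exact Real.rpow_le_rpow_of_nonpos hδ0 (by nlinarith [norm_nonneg w, hx.1])
                  (by linarith)
              · apply setLIntegral_mono' measurableSet_Ioc
                intro x hx
                have hx0 : 0 < x := hδ0.trans hx.1
                apply ENNReal.ofReal_le_ofReal
                calc x ^ (p - 2) * (1 - ‖w‖ * (1 - x)) ^ (1 - p) ≤ x ^ (p - 2) * x ^ (1 - p) := by
                      gcongr ?_ * ?_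
                      exact Real.rpow_le_rpow_of_nonpos hx0
                        (by nlinarith [norm_nonneg w, hx.2]) (by linarith)
                  _ = x⁻¹ := by
                      rw [← Real.rpow_add hx0, ← Real.rpow_neg_one]; congr 1; ring
          _ = ENNReal.ofReal (1 / (p - 1) + Real.log (1 / δ)) := by
              have hl : 0 ≤ Real.log (1 / δ) := Real.log_nonneg (by rw [le_div_iff₀ hδ0]; linarith)
              rw [lintegral_const_mul _ (by fun_prop), lint_rpow_Ioc _ _ (by linarith) hδ0,
                lint_inv_Ioc δ hδ0 hδ1, ← ENNReal.ofReal_mul (by positivity),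
                ENNReal.ofReal_add (by positivity) hl]
              congr 2
              rw [← mul_div_assoc, ← Real.rpow_add hδ0]
              ring_nf; simp
          _ ≤ _ := by
              apply ENNReal.ofReal_le_ofReal
              have h1 : Real.log (1 / δ) ≤ LL w := by
                apply Real.log_le_log (by positivity); gcongr; norm_num
              have h2 : 1 / (p - 1) ≤ 1 / ((p - 1) * Real.log 2) * LL w := by
                rw [div_mul_eq_mul_div, one_mul, div_le_div_iff₀ hp0 (by positivity)]
                nlinarith
              linarith
    _ = _ := by
        rw [← ENNReal.ofReal_mul (by positivity)]; congr 1; ring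

theorem cs_sq {μ : Measure ℂ} (f g : ℂ → ℝ≥0∞) (hf : AEMeasurable f μ) (hg : AEMeasurable g μ) :
    (∫⁻ z, f z * g z ∂μ) ^ 2 ≤ (∫⁻ z, f z ^ 2 ∂μ) * ∫⁻ z, g z ^ 2 ∂μ := by
  have h := ENNReal.lintegral_mul_le_Lp_mul_Lq μ Real.HolderConjugate.two_two hf hg
  simp only [ENNReal.rpow_two, Pi.mul_apply] at h
  calc _ ≤ ((∫⁻ z, f z ^ 2 ∂μ) ^ (1 / (2:ℝ)) * (∫⁻ z, g z ^ 2 ∂μ) ^ (1 / (2:ℝ))) ^ 2 := by gcongr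
    _ = _ := by
        rw [mul_pow, ← ENNReal.rpow_two, ← ENNReal.rpow_two, ← ENNReal.rpow_mul, ← ENNReal.rpow_mul]
        norm_num


theorem HolOn.deriv_hol {f : ℂ → ℂ} (hf : HolOn f) : HolOn (deriv f) :=
  DifferentiableOn.deriv hf isOpen_ball

theorem HolOn.hasDerivAt {f : ℂ → ℂ} (hf : HolOn f) {z : ℂ} (hz : ‖z‖ < 1) :
    HasDerivAt f (deriv f z) z :=
  (DifferentiableOn.differentiableAt hf
    (isOpen_ball.mem_nhds (mem_ball_zero_iff.2 hz))).hasDerivAt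

theorem HolOn.contAt {f : ℂ → ℂ} (hf : HolOn f) {z : ℂ} (hz : ‖z‖ < 1) : ContinuousAt f z :=
  (hf.hasDerivAt hz).continuousAt

theorem norm_circle (ρ θ : ℝ) (h : 0 ≤ ρ) : ‖circleMap 0 ρ θ‖ = ρ := by
  simp [circleMap, abs_of_nonneg h]

theorem cauchy_circle (F : ℂ → ℂ) (hF : HolOn F) (w : ℂ) (hw : ‖w‖ < 1) (ρ : ℝ) (h0 : 0 < ρ)
    (h1 : ρ < 1) :
    ENNReal.ofReal ‖F (w * ρ ^ 2)‖ ≤ ENNReal.ofReal (2 * π)⁻¹ * ∫⁻ θ in Ioo (-π) π,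
      ENNReal.ofReal (‖F (circleMap 0 ρ θ)‖ * ‖1 - w * (starRingEnd ℂ) (circleMap 0 ρ θ)‖⁻¹) := by
  have hd : DiffContOnCl ℂ F (ball 0 |ρ|) := by
    apply DifferentiableOn.diffContOnCl
    apply DifferentiableOn.mono hF
    refine closure_ball_subset_closedBall.trans ?_
    rw [abs_of_pos h0]
    exact closedBall_subset_ball h1
  have hwρ : ‖w * (ρ:ℂ) ^ 2‖ < ρ := by
    rw [norm_mul, norm_pow, Complex.norm_real, Real.norm_eq_abs, abs_of_pos h0]
    nlinarith [norm_nonneg w, mul_pos h0 h0]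
  have hmem : w * (ρ:ℂ) ^ 2 ∈ ball (0:ℂ) |ρ| := by
    rw [mem_ball_zero_iff, abs_of_pos h0]; exact hwρ
  have e := DiffContOnCl.circleAverage_smul_div hd hmem
  rw [← e, Real.circleAverage_def]
  set G : ℝ → ℂ := fun θ => ((circleMap 0 ρ θ - 0) / (circleMap 0 ρ θ - w * (ρ:ℂ) ^ 2)) •
    F (circleMap 0 ρ θ) with hG
  have hper : Function.Periodic G (2 * π) := by
    intro θ; simp only [hG]; rw [periodic_circleMap 0 ρ θ]
  have hintg : ∫ θ in (0:ℝ)..2 * π, G θ = ∫ θ in (-π)..π, G θ := by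
    have := hper.intervalIntegral_add_eq 0 (-π)
    rw [zero_add, show -π + 2 * π = π by ring] at this
    exact this
  change ENNReal.ofReal ‖(2 * π)⁻¹ • ∫ θ in (0:ℝ)..2 * π, G θ‖ ≤ _
  rw [hintg, norm_smul, Real.norm_of_nonneg (by positivity), ENNReal.ofReal_mul (by positivity)]
  refine mul_le_mul' le_rfl ?_
  rw [intervalIntegral.integral_of_le (by linarith [Real.pi_pos]), ofReal_norm]
  refine (enorm_integral_le_lintegral_enorm _).trans ?_
  rw [setLIntegral_congr Ioo_ae_eq_Ioc]
  apply le_of_eq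
  apply setLIntegral_congr_fun measurableSet_Ioc
  intro θ hθ
  dsimp only
  rw [← ofReal_norm]
  congr 1
  simp only [hG]
  rw [norm_smul, sub_zero, mul_comm, norm_div]
  congr 1
  set u := circleMap 0 ρ θ with hu
  have hun : ‖u‖ = ρ := norm_circle ρ θ h0.le
  have hu0 : u ≠ 0 := by rw [← norm_pos_iff, hun]; exact h0
  have e1 : (ρ:ℂ) ^ 2 = u * (starRingEnd ℂ) u := by
    rw [Complex.mul_conj, Complex.normSq_eq_norm_sq, hun]; push_cast; rfl
  have e2 : u - w * (ρ:ℂ) ^ 2 = u * (1 - w * (starRingEnd ℂ) u) := by rw [e1]; ring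
  rw [e2, norm_mul, div_mul_eq_div_div, div_self (by rw [hun]; exact h0.ne'), one_div]

theorem repro (h : ℂ → ℂ) (hh : HolOn h) (w : ℂ) (hw : ‖w‖ < 1) :
    ENNReal.ofReal ‖h w - h 0‖ ≤ ∫⁻ u in ball (0:ℂ) 1,
      ENNReal.ofReal (‖deriv h u‖ * ‖1 - w * (starRingEnd ℂ) u‖⁻¹) ∂dA := by
  have hin : ∀ ρ ∈ Icc (0:ℝ) 1, ‖w * (ρ:ℂ) ^ 2‖ < 1 := by
    intro ρ hρ
    rw [norm_mul, norm_pow, Complex.norm_real, Real.norm_eq_abs, abs_of_nonneg hρ.1]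
    have : ρ ^ 2 ≤ 1 := by nlinarith [hρ.1, hρ.2]
    nlinarith [norm_nonneg w, sq_nonneg ρ]
  have hder : ∀ ρ ∈ uIcc (0:ℝ) 1, HasDerivAt (fun ρ : ℝ => h (w * (ρ:ℂ) ^ 2))
      (deriv h (w * (ρ:ℂ) ^ 2) * (w * (2 * ρ))) ρ := by
    intro ρ hρ
    rw [uIcc_of_le zero_le_one] at hρ
    have h1 := hh.hasDerivAt (hin ρ hρ)
    have h2 : HasDerivAt (fun ρ : ℂ => w * ρ ^ 2) (w * (2 * (ρ:ℂ))) (ρ:ℂ) := by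
      have := (hasDerivAt_pow 2 (ρ:ℂ)).const_mul w
      simpa using this
    exact (h1.comp (ρ:ℂ) h2).comp_ofReal
  have hcont : ContinuousOn (fun ρ : ℝ => deriv h (w * (ρ:ℂ) ^ 2) * (w * (2 * ρ))) (uIcc 0 1) := by
    intro ρ hρ
    rw [uIcc_of_le zero_le_one] at hρ
    apply ContinuousAt.continuousWithinAt
    apply ContinuousAt.mul
    · exact ContinuousAt.comp (f := fun ρ : ℝ => w * (ρ:ℂ) ^ 2)
        (hh.deriv_hol.contAt (hin ρ hρ)) (by fun_prop)
    · fun_prop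
  have ftc := intervalIntegral.integral_eq_sub_of_hasDerivAt hder hcont.intervalIntegrable
  have hm : Measurable fun u : ℂ => ENNReal.ofReal (‖deriv h u‖ * ‖1 - w * (starRingEnd ℂ) u‖⁻¹) := by
    have := Complex.continuous_conj.measurable
    have := measurable_deriv h
    fun_prop
  rw [lint_dA, polar_ball _ hm, ← lintegral_const_mul' _ _ (by simp [Real.pi_pos])]
  have e0 : h w - h 0 = ∫ ρ in (0:ℝ)..1, deriv h (w * (ρ:ℂ) ^ 2) * (w * (2 * ρ)) := by
    rw [ftc]; simp
  rw [e0, intervalIntegral.integral_of_le zero_le_one, ofReal_norm]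
  refine (enorm_integral_le_lintegral_enorm _).trans ?_
  rw [← setLIntegral_congr Ioo_ae_eq_Ioc]
  apply setLIntegral_mono' measurableSet_Ioo
  intro ρ hρ
  have hρ0 := hρ.1
  have hc := cauchy_circle _ hh.deriv_hol w hw ρ hρ.1 hρ.2
  rw [lintegral_const_mul' _ _ ENNReal.ofReal_ne_top, ← ofReal_norm]
  calc ENNReal.ofReal ‖deriv h (w * (ρ:ℂ) ^ 2) * (w * (2 * ρ))‖
      ≤ ENNReal.ofReal (2 * ρ) * ENNReal.ofReal ‖deriv h (w * (ρ:ℂ) ^ 2)‖ := by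
        rw [← ENNReal.ofReal_mul (by positivity)]
        apply ENNReal.ofReal_le_ofReal
        rw [norm_mul, norm_mul, norm_mul, Complex.norm_real, Real.norm_of_nonneg hρ0.le, Complex.norm_ofNat,
          mul_comm]
        refine mul_le_mul_of_nonneg_right ?_ (norm_nonneg _)
        nlinarith
    _ ≤ _ := mul_le_mul' le_rfl hc
    _ = _ := by
        rw [← mul_assoc, ← mul_assoc, ← ENNReal.ofReal_mul (by positivity),
          ← ENNReal.ofReal_inv_of_pos Real.pi_pos, ← ENNReal.ofReal_mul (by positivity)]
        congr 2
        field_simp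

/-! Moebius maps -/

theorem den_ne (a z : ℂ) (ha : ‖a‖ < 1) (hz : ‖z‖ < 1) : 1 - (starRingEnd ℂ) a * z ≠ 0 := by
  intro h
  have h2 := (norm_lower z a hz ha).1
  rw [mul_comm, h, norm_zero] at h2
  exact lt_irrefl _ h2

theorem one_sub_phi (a z : ℂ) (ha : ‖a‖ < 1) (hz : ‖z‖ < 1) :
    1 - ‖phi a z‖ ^ 2 = (1 - ‖a‖ ^ 2) * (1 - ‖z‖ ^ 2) / ‖1 - (starRingEnd ℂ) a * z‖ ^ 2 := by
  have h := den_ne a z ha hz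
  have hp : 0 < ‖1 - (starRingEnd ℂ) a * z‖ := norm_pos_iff.2 h
  rw [phi, norm_div, eq_div_iff (by positivity), sub_mul, div_pow, div_mul_cancel₀ _ (by positivity)]
  simp only [← Complex.normSq_eq_norm_sq, Complex.normSq_apply]
  simp
  ring

theorem phi_mem (a z : ℂ) (ha : ‖a‖ < 1) (hz : ‖z‖ < 1) : ‖phi a z‖ < 1 := by
  have h := one_sub_phi a z ha hz
  have hp : 0 < ‖1 - (starRingEnd ℂ) a * z‖ := norm_pos_iff.2 (den_ne a z ha hz)
  have h1 : 0 < 1 - ‖a‖ ^ 2 := by nlinarith [norm_nonneg a]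
  have h2 : 0 < 1 - ‖z‖ ^ 2 := by nlinarith [norm_nonneg z]
  have : 0 < 1 - ‖phi a z‖ ^ 2 := by rw [h]; positivity
  nlinarith [norm_nonneg (phi a z)]

theorem one_sub_phi_pos (a z : ℂ) (ha : ‖a‖ < 1) (hz : ‖z‖ < 1) : 0 < 1 - ‖phi a z‖ ^ 2 := by
  nlinarith [phi_mem a z ha hz, norm_nonneg (phi a z)]

theorem one_sub_conj_mul_ne (a : ℂ) (ha : ‖a‖ < 1) : 1 - (starRingEnd ℂ) a * a ≠ 0 :=
  den_ne a a ha ha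

theorem phi_phi (a z : ℂ) (ha : ‖a‖ < 1) (hz : ‖z‖ < 1) : phi a (phi a z) = z := by
  have h := den_ne a z ha hz
  have h3 := den_ne a a ha ha
  have h2 := den_ne a (phi a z) ha (phi_mem a z ha hz)
  rw [phi, div_eq_iff h2]
  have hp : phi a z * (1 - (starRingEnd ℂ) a * z) = a - z := by rw [phi, div_mul_cancel₀ _ h]
  apply mul_right_cancel₀ h
  linear_combination (-1 + z * (starRingEnd ℂ) a) * hp

theorem phi_zero (a : ℂ) : phi a 0 = a := by simp [phi]

theorem phi_deriv (a z : ℂ) (ha : ‖a‖ < 1) (hz : ‖z‖ < 1) :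
    DifferentiableAt ℂ (phi a) z := by
  have h := den_ne a z ha hz
  unfold phi
  exact DifferentiableAt.div (by fun_prop) (by fun_prop) h

theorem phi_hol (a : ℂ) (ha : ‖a‖ < 1) : HolOn (phi a) := fun z hz =>
  (phi_deriv a z ha (mem_ball_zero_iff.1 hz)).differentiableWithinAt

theorem phi_swap (a v z : ℂ) (ha : ‖a‖ < 1) (hv : ‖v‖ < 1) (hz : ‖z‖ < 1) :
    1 - ‖phi v (phi a z)‖ ^ 2 = 1 - ‖phi (phi a v) z‖ ^ 2 := by
  have hpz := phi_mem a z ha hz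
  have hpv := phi_mem a v ha hv
  rw [one_sub_phi v _ hv hpz, one_sub_phi _ z hpv hz, one_sub_phi a z ha hz, one_sub_phi a v ha hv]
  have hz' := den_ne a z ha hz
  have hv' := den_ne a v ha hv
  have hcv : 1 - a * (starRingEnd ℂ) v ≠ 0 := by
    intro hh; apply hv'
    have := congrArg (starRingEnd ℂ) hh
    simpa using this
  have e1 : 1 - (starRingEnd ℂ) v * phi a z =
      (1 - (starRingEnd ℂ) a * z - (starRingEnd ℂ) v * a + (starRingEnd ℂ) v * z) /
      (1 - (starRingEnd ℂ) a * z) := by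
    rw [phi, eq_div_iff hz', sub_mul, mul_assoc, div_mul_cancel₀ _ hz']; ring
  have e2 : 1 - (starRingEnd ℂ) (phi a v) * z =
      (1 - (starRingEnd ℂ) a * z - (starRingEnd ℂ) v * a + (starRingEnd ℂ) v * z) /
      (1 - a * (starRingEnd ℂ) v) := by
    rw [phi]; simp only [map_div₀, map_sub, map_mul, map_one, Complex.conj_conj]
    rw [eq_div_iff hcv, sub_mul, mul_right_comm, div_mul_cancel₀ _ hcv]; ring
  have e3 : ‖1 - a * (starRingEnd ℂ) v‖ = ‖1 - (starRingEnd ℂ) a * v‖ := by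
    rw [← Complex.norm_conj]; simp
  have n1 : 0 < ‖1 - (starRingEnd ℂ) a * z‖ := norm_pos_iff.2 hz'
  have n2 : 0 < ‖1 - (starRingEnd ℂ) a * v‖ := norm_pos_iff.2 hv'
  have n3 : 0 < ‖1 - (starRingEnd ℂ) v * phi a z‖ := norm_pos_iff.2 (den_ne v _ hv hpz)
  rw [e1, norm_div] at n3 ⊢
  rw [e2, norm_div, e3]
  have n4 : 0 < ‖1 - (starRingEnd ℂ) a * z - (starRingEnd ℂ) v * a + (starRingEnd ℂ) v * z‖ := by
    by_contra hcon
    have : ‖1 - (starRingEnd ℂ) a * z - (starRingEnd ℂ) v * a + (starRingEnd ℂ) v * z‖ = 0 :=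
      le_antisymm (not_lt.1 hcon) (norm_nonneg _)
    rw [this, zero_div] at n3; exact lt_irrefl _ n3
  field_simp

theorem phi_image (a : ℂ) (ha : ‖a‖ < 1) : phi a '' ball (0:ℂ) 1 = ball 0 1 := by
  ext z
  constructor
  · rintro ⟨u, hu, rfl⟩
    exact mem_ball_zero_iff.2 (phi_mem a u ha (mem_ball_zero_iff.1 hu))
  · intro hz
    have hz := mem_ball_zero_iff.1 hz
    exact ⟨phi a z, mem_ball_zero_iff.2 (phi_mem a z ha hz), phi_phi a z ha hz⟩

theorem change_var (a : ℂ) (ha : ‖a‖ < 1) (F : ℂ → ℝ≥0∞) :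
    ∫⁻ u in ball (0:ℂ) 1, F u ∂dA =
      ∫⁻ v in ball (0:ℂ) 1, ENNReal.ofReal (‖deriv (phi a) v‖ ^ 2) * F (phi a v) ∂dA := by
  rw [lint_dA, lint_dA]
  congr 1
  have hinj : InjOn (phi a) (ball (0:ℂ) 1) := by
    intro x hx y hy hxy
    rw [← phi_phi a x ha (mem_ball_zero_iff.1 hx), hxy, phi_phi a y ha (mem_ball_zero_iff.1 hy)]
  have h := lintegral_image_eq_lintegral_abs_det_fderiv_mul volume measurableSet_ball
    (f := phi a) (s := ball (0:ℂ) 1)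
    (f' := fun z => (ContinuousLinearMap.toSpanSingleton ℂ (deriv (phi a) z)).restrictScalars ℝ)
    (fun z hz => (((phi_deriv a z ha (mem_ball_zero_iff.1 hz)).hasDerivAt.hasFDerivAt).restrictScalars
      ℝ).hasFDerivWithinAt) hinj F
  rw [phi_image a ha] at h
  rw [h]
  congr 1
  ext z
  congr 2
  have hd : ((ContinuousLinearMap.toSpanSingleton ℂ (deriv (phi a) z)).restrictScalars ℝ).det =
      ‖deriv (phi a) z‖ ^ 2 := by
    rw [ContinuousLinearMap.det, ContinuousLinearMap.coe_restrictScalars,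
      LinearMap.det_restrictScalars]
    simp [Algebra.norm_complex_eq, Complex.normSq_eq_norm_sq]
  rw [hd, abs_of_nonneg (by positivity)]


theorem dA_sfinite : SFinite dA := by unfold dA; infer_instance

/-- Dirichlet integral -/
noncomputable def Dir (f : ℂ → ℂ) : ℝ≥0∞ :=
  ∫⁻ u in ball (0:ℂ) 1, ENNReal.ofReal (‖deriv f u‖ ^ 2) ∂dA

/-- the Q_s integral -/
noncomputable def QI (s : ℝ) (f : ℂ → ℂ) (a : ℂ) : ℝ≥0∞ :=
  ∫⁻ z in ball (0:ℂ) 1, ENNReal.ofReal (‖deriv f z‖ ^ 2 * (1 - ‖phi a z‖ ^ 2) ^ s) ∂dA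

theorem core0 (s : ℝ) (hs0 : 0 < s) (hs1 : s < 1) : ∃ C : ℝ≥0∞, C ≠ ⊤ ∧ ∀ h : ℂ → ℂ, HolOn h →
    ∀ w : ℂ, ‖w‖ < 1 → ENNReal.ofReal (‖h w - h 0‖ ^ 2 * (1 - ‖w‖ ^ 2) ^ s) ≤
      C * ∫⁻ v in ball (0:ℂ) 1, ENNReal.ofReal (‖deriv h v‖ ^ 2 * (1 - ‖phi v w‖ ^ 2) ^ s) ∂dA := by
  obtain ⟨C, hC, hK⟩ := K1 s hs0 hs1
  have hpi : (ENNReal.ofReal π)⁻¹ ≠ ⊤ := by simp [Real.pi_pos]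
  refine ⟨(ENNReal.ofReal π)⁻¹ * C, ENNReal.mul_ne_top hpi hC, ?_⟩
  intro h hh w hw
  have hconj := Complex.continuous_conj.measurable
  have hdm := measurable_deriv h
  set N : ℂ → ℝ := fun u => ‖1 - w * (starRingEnd ℂ) u‖ with hN
  have hNm : Measurable N := by fun_prop
  set X : ℂ → ℝ≥0∞ := fun u => ENNReal.ofReal (‖deriv h u‖ * ((1 - ‖u‖ ^ 2) ^ (s / 2) * N u ^ (-s)))
    with hX
  set Y : ℂ → ℝ≥0∞ := fun u => ENNReal.ofReal ((1 - ‖u‖ ^ 2) ^ (-(s / 2)) * N u ^ (s - 1))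
    with hY
  have hXm : Measurable X := by fun_prop
  have hYm : Measurable Y := by fun_prop
  have hw2 : 0 < 1 - ‖w‖ ^ 2 := by nlinarith [norm_nonneg w]
  have hpos : ∀ u ∈ ball (0:ℂ) 1, 0 < 1 - ‖u‖ ^ 2 ∧ 0 < N u := by
    intro u hu
    rw [mem_ball_zero_iff] at hu
    exact ⟨by nlinarith [norm_nonneg u], (norm_lower w u hw hu).1⟩
  have h1 : ENNReal.ofReal ‖h w - h 0‖ ≤ ∫⁻ u in ball (0:ℂ) 1, X u * Y u ∂dA := by
    refine (repro h hh w hw).trans (le_of_eq ?_)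
    apply setLIntegral_congr_fun measurableSet_ball
    intro u hu
    obtain ⟨p1, p2⟩ := hpos u hu
    simp only [hX, hY]
    rw [← ENNReal.ofReal_mul (by positivity)]
    congr 1
    have e1 : (1 - ‖u‖ ^ 2) ^ (s / 2) * (1 - ‖u‖ ^ 2) ^ (-(s / 2)) = 1 := by
      rw [← Real.rpow_add p1]; simp
    have e2 : N u ^ (-s) * N u ^ (s - 1) = (N u)⁻¹ := by
      rw [← Real.rpow_add p2, ← Real.rpow_neg_one]; congr 1; ring
    rw [← e2]
    linear_combination -‖deriv h u‖ * N u ^ (-s) * N u ^ (s - 1) * e1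
  have h2 := cs_sq (μ := dA.restrict (ball (0:ℂ) 1)) X Y hXm.aemeasurable hYm.aemeasurable
  have hYi : ∫⁻ u in ball (0:ℂ) 1, Y u ^ 2 ∂dA ≤ (ENNReal.ofReal π)⁻¹ * C := by
    rw [lint_dA]
    refine mul_le_mul' le_rfl (le_trans (le_of_eq ?_) (hK w hw))
    apply setLIntegral_congr_fun measurableSet_ball
    intro u hu
    obtain ⟨p1, p2⟩ := hpos u hu
    simp only [hY]
    rw [← ENNReal.ofReal_pow (by positivity)]
    congr 1
    rw [mul_pow, ← Real.rpow_mul_natCast p1.le, ← Real.rpow_mul_natCast p2.le]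
    congr 2 <;> push_cast <;> ring
  have hXi : ENNReal.ofReal ((1 - ‖w‖ ^ 2) ^ s) * ∫⁻ u in ball (0:ℂ) 1, X u ^ 2 ∂dA =
      ∫⁻ v in ball (0:ℂ) 1, ENNReal.ofReal (‖deriv h v‖ ^ 2 * (1 - ‖phi v w‖ ^ 2) ^ s) ∂dA := by
    rw [← lintegral_const_mul' _ _ ENNReal.ofReal_ne_top]
    apply setLIntegral_congr_fun measurableSet_ball
    intro u hu
    obtain ⟨p1, p2⟩ := hpos u hu
    simp only [hX]
    rw [← ENNReal.ofReal_pow (by positivity), ← ENNReal.ofReal_mul (by positivity),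
      one_sub_phi u w (mem_ball_zero_iff.1 hu) hw]
    congr 1
    have e3 : ‖1 - (starRingEnd ℂ) u * w‖ = N u := by simp only [hN]; rw [mul_comm]
    rw [e3, Real.div_rpow (by positivity) (by positivity), Real.mul_rpow p1.le hw2.le, mul_pow, mul_pow,
      ← Real.rpow_mul_natCast p1.le, ← Real.rpow_mul_natCast p2.le, ← Real.rpow_natCast (N u) 2,
      ← Real.rpow_mul p2.le, Real.rpow_def_of_pos p2 (-s * _),
      Real.rpow_def_of_pos p2 (_ * s)]
    have e4 : s / 2 * ((2:ℕ):ℝ) = s := by push_cast; ring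
    rw [e4, show Real.log (N u) * (-s * ((2:ℕ):ℝ)) = -(Real.log (N u) * (((2:ℕ):ℝ) * s)) by ring,
      Real.exp_neg]
    ring
  calc ENNReal.ofReal (‖h w - h 0‖ ^ 2 * (1 - ‖w‖ ^ 2) ^ s)
      = ENNReal.ofReal ((1 - ‖w‖ ^ 2) ^ s) * ENNReal.ofReal ‖h w - h 0‖ ^ 2 := by
        rw [← ENNReal.ofReal_pow (by positivity), ← ENNReal.ofReal_mul (by positivity), mul_comm]
    _ ≤ ENNReal.ofReal ((1 - ‖w‖ ^ 2) ^ s) * ((∫⁻ u in ball (0:ℂ) 1, X u ^ 2 ∂dA) *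
          ((ENNReal.ofReal π)⁻¹ * C)) := by
        refine mul_le_mul' le_rfl ?_
        exact ((pow_le_pow_left' h1 2).trans h2).trans (mul_le_mul' le_rfl hYi)
    _ = _ := by rw [← mul_assoc, hXi, mul_comm]

theorem core (s : ℝ) (hs0 : 0 < s) (hs1 : s < 1) : ∃ C : ℝ≥0∞, C ≠ ⊤ ∧ ∀ f : ℂ → ℂ, HolOn f →
    ∀ a z : ℂ, ‖a‖ < 1 → ‖z‖ < 1 →
      ENNReal.ofReal (‖f z - f a‖ ^ 2 * (1 - ‖phi a z‖ ^ 2) ^ s) ≤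
      C * ∫⁻ u in ball (0:ℂ) 1, ENNReal.ofReal (‖deriv f u‖ ^ 2 * (1 - ‖phi u z‖ ^ 2) ^ s) ∂dA := by
  obtain ⟨C, hC, hK⟩ := core0 s hs0 hs1
  refine ⟨C, hC, ?_⟩
  intro f hf a z ha hz
  have hh : HolOn (fun v => f (phi a v)) := by
    refine DifferentiableOn.comp (g := f) (t := ball 0 1) hf (phi_hol a ha) ?_
    intro v hv
    exact mem_ball_zero_iff.2 (phi_mem a v ha (mem_ball_zero_iff.1 hv))
  have := hK _ hh (phi a z) (phi_mem a z ha hz)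
  simp only [phi_phi a z ha hz, phi_zero] at this
  refine this.trans (le_of_eq ?_)
  rw [change_var a ha (fun u => ENNReal.ofReal (‖deriv f u‖ ^ 2 * (1 - ‖phi u z‖ ^ 2) ^ s))]
  congr 1
  apply setLIntegral_congr_fun measurableSet_ball
  intro v hv
  have hv := mem_ball_zero_iff.1 hv
  dsimp only
  rw [← ENNReal.ofReal_mul (by positivity), ← phi_swap a v z ha hv hz]
  congr 1
  have hd : deriv (fun v => f (phi a v)) v = deriv f (phi a v) * deriv (phi a) v :=
    ((hf.hasDerivAt (phi_mem a v ha hv)).comp v (phi_deriv a v ha hv).hasDerivAt).deriv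
  rw [hd, norm_mul]
  ring

theorem lemF (s : ℝ) (hs0 : 0 < s) (hs1 : s < 1) : ∃ C : ℝ≥0∞, C ≠ ⊤ ∧ ∀ f g : ℂ → ℂ, HolOn f →
    ∀ M : ℝ≥0∞, (∀ u : ℂ, ‖u‖ < 1 → QI s g u ≤ M) → ∀ a : ℂ, ‖a‖ < 1 →
      ∫⁻ z in ball (0:ℂ) 1, ENNReal.ofReal (‖f z - f a‖ ^ 2 * (‖deriv g z‖ ^ 2 *
        (1 - ‖phi a z‖ ^ 2) ^ s)) ∂dA ≤ C * (M * Dir f) := by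
  obtain ⟨C, hC, hK⟩ := core s hs0 hs1
  refine ⟨C, hC, ?_⟩
  intro f g hf M hM a ha
  have := dA_sfinite
  have hdf := measurable_deriv f
  have hdg := measurable_deriv g
  have hconj := Complex.continuous_conj.measurable
  have hphi : Measurable fun p : ℂ × ℂ => ‖phi p.2 p.1‖ := by
    unfold phi; fun_prop
  calc _ ≤ ∫⁻ z in ball (0:ℂ) 1, C * ∫⁻ u in ball (0:ℂ) 1, ENNReal.ofReal (‖deriv g z‖ ^ 2) *
        ENNReal.ofReal (‖deriv f u‖ ^ 2 * (1 - ‖phi u z‖ ^ 2) ^ s) ∂dA ∂dA := by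
        apply setLIntegral_mono' measurableSet_ball
        intro z hz
        rw [lintegral_const_mul' _ _ ENNReal.ofReal_ne_top]
        calc _ = ENNReal.ofReal (‖deriv g z‖ ^ 2) *
              ENNReal.ofReal (‖f z - f a‖ ^ 2 * (1 - ‖phi a z‖ ^ 2) ^ s) := by
              rw [← ENNReal.ofReal_mul (by positivity)]; congr 1; ring
          _ ≤ _ := mul_le_mul' le_rfl (hK f hf a z ha (mem_ball_zero_iff.1 hz))
          _ = _ := mul_left_comm _ _ _
    _ = C * ∫⁻ z in ball (0:ℂ) 1, ∫⁻ u in ball (0:ℂ) 1, ENNReal.ofReal (‖deriv g z‖ ^ 2) *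
        ENNReal.ofReal (‖deriv f u‖ ^ 2 * (1 - ‖phi u z‖ ^ 2) ^ s) ∂dA ∂dA :=
        lintegral_const_mul' _ _ hC
    _ = C * ∫⁻ u in ball (0:ℂ) 1, ∫⁻ z in ball (0:ℂ) 1, ENNReal.ofReal (‖deriv g z‖ ^ 2) *
        ENNReal.ofReal (‖deriv f u‖ ^ 2 * (1 - ‖phi u z‖ ^ 2) ^ s) ∂dA ∂dA := by
        congr 1
        apply lintegral_lintegral_swap
        apply Measurable.aemeasurable
        have m1 : Measurable fun p : ℂ × ℂ => deriv g p.1 := hdg.comp measurable_fst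
        have m2 : Measurable fun p : ℂ × ℂ => deriv f p.2 := hdf.comp measurable_snd
        unfold Function.uncurry
        fun_prop
    _ ≤ C * ∫⁻ u in ball (0:ℂ) 1, M * ENNReal.ofReal (‖deriv f u‖ ^ 2) ∂dA := by
        refine mul_le_mul' le_rfl ?_
        apply setLIntegral_mono' measurableSet_ball
        intro u hu
        have hu := mem_ball_zero_iff.1 hu
        calc _ = ∫⁻ z in ball (0:ℂ) 1, ENNReal.ofReal (‖deriv f u‖ ^ 2) *
              ENNReal.ofReal (‖deriv g z‖ ^ 2 * (1 - ‖phi u z‖ ^ 2) ^ s) ∂dA := by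
              congr 1; ext z
              rw [← ENNReal.ofReal_mul (by positivity), ← ENNReal.ofReal_mul (by positivity)]
              congr 1; ring
          _ = ENNReal.ofReal (‖deriv f u‖ ^ 2) * QI s g u :=
              lintegral_const_mul' _ _ ENNReal.ofReal_ne_top
          _ ≤ _ := by rw [mul_comm]; exact mul_le_mul' (hM u hu) le_rfl
    _ = _ := by
        rw [lintegral_const_mul _ (by fun_prop)]; rfl

theorem growth : ∃ C : ℝ, 0 < C ∧ ∀ f : ℂ → ℂ, HolOn f → ∀ w : ℂ, ‖w‖ < 1 →
    ENNReal.ofReal (‖f w - f 0‖ ^ 2) ≤ ENNReal.ofReal (C * LL w) * Dir f := by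
  obtain ⟨C, hC, hK⟩ := K2 2 (by norm_num) le_rfl
  refine ⟨C / π, by positivity, ?_⟩
  intro f hf w hw
  have hdf := measurable_deriv f
  have hconj := Complex.continuous_conj.measurable
  have h1 := repro f hf w hw
  have h2 := cs_sq (μ := dA.restrict (ball (0:ℂ) 1)) (fun u => ENNReal.ofReal ‖deriv f u‖)
    (fun u => ENNReal.ofReal (‖1 - w * (starRingEnd ℂ) u‖⁻¹)) (by fun_prop) (by fun_prop)
  simp_rw [ENNReal.ofReal_mul (norm_nonneg _)] at h1
  rw [ENNReal.ofReal_pow (norm_nonneg _)]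
  refine ((pow_le_pow_left' h1 2).trans h2).trans ?_
  rw [mul_comm]
  simp_rw [← ENNReal.ofReal_pow (norm_nonneg _)]
  refine mul_le_mul' ?_ le_rfl
  rw [lint_dA, ← ENNReal.ofReal_inv_of_pos Real.pi_pos, show C / π * LL w = π⁻¹ * (C * LL w) by ring,
    ENNReal.ofReal_mul (by positivity)]
  refine mul_le_mul' le_rfl (le_trans (le_of_eq ?_) (hK w hw))
  apply setLIntegral_congr_fun measurableSet_ball
  intro u hu
  dsimp only
  rw [← ENNReal.ofReal_pow (by positivity)]
  congr 1
  rw [sub_self, Real.rpow_zero, one_mul, inv_pow, Real.rpow_neg (norm_nonneg _), Real.rpow_two]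

theorem meanval (F : ℂ → ℂ) (hF : HolOn F) (hm : Measurable F) :
    ENNReal.ofReal ‖F 0‖ ≤ ∫⁻ u in ball (0:ℂ) 1, ENNReal.ofReal ‖F u‖ ∂dA := by
  rw [lint_dA, polar_ball _ (by fun_prop), ← lintegral_const_mul' _ _ (by simp [Real.pi_pos])]
  have h12 : ∫⁻ ρ in Ioo (0:ℝ) 1, ENNReal.ofReal ρ = ENNReal.ofReal (1/2) := by
    have := lint_rpow_Ioc 1 1 (by norm_num) one_pos
    simp only [Real.rpow_one] at this
    rw [setLIntegral_congr Ioo_ae_eq_Ioc, this]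
    norm_num
  calc ENNReal.ofReal ‖F 0‖ = (ENNReal.ofReal (2 * ‖F 0‖)) * ∫⁻ ρ in Ioo (0:ℝ) 1, ENNReal.ofReal ρ := by
        rw [h12, ← ENNReal.ofReal_mul (by positivity)]; congr 1; ring
    _ = ∫⁻ ρ in Ioo (0:ℝ) 1, (ENNReal.ofReal (2 * ‖F 0‖)) * ENNReal.ofReal ρ :=
        (lintegral_const_mul' _ _ ENNReal.ofReal_ne_top).symm
    _ ≤ _ := by
        apply setLIntegral_mono' measurableSet_Ioo
        intro ρ hρ
        rw [lintegral_const_mul' _ _ ENNReal.ofReal_ne_top]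
        have hc := cauchy_circle F hF 0 (by simp) ρ hρ.1 hρ.2
        simp only [zero_mul, sub_zero, norm_one, inv_one, mul_one] at hc
        calc _ = ENNReal.ofReal (2 * ρ) * ENNReal.ofReal ‖F 0‖ := by
              have := hρ.1
              rw [← ENNReal.ofReal_mul (by positivity), ← ENNReal.ofReal_mul (by positivity)]
              congr 1; ring
          _ ≤ _ := mul_le_mul' le_rfl hc
          _ = _ := by
              have := hρ.1
              rw [← mul_assoc, ← mul_assoc, ← ENNReal.ofReal_mul (by positivity),
                ← ENNReal.ofReal_inv_of_pos Real.pi_pos, ← ENNReal.ofReal_mul (by positivity)]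
              congr 2
              field_simp


theorem dA_ball_lt : dA (ball (0:ℂ) 1) < ⊤ := by
  have : ∫⁻ z in ball (0:ℂ) 1, 1 ∂dA = dA (ball (0:ℂ) 1) := by simp
  rw [← this, lint_dA]
  simp only [lintegral_const, one_mul, Measure.restrict_apply_univ]
  exact ENNReal.mul_lt_top (by simp [Real.pi_pos]) measure_ball_lt_top

theorem affine_var (z : ℂ) (R : ℝ) (hR : 0 < R) (hz : ‖z‖ + R ≤ 1) (F : ℂ → ℝ≥0∞) :
    ∫⁻ u in ball (0:ℂ) 1, ENNReal.ofReal (R ^ 2) * F (z + R * u) ∂dA ≤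
      ∫⁻ v in ball (0:ℂ) 1, F v ∂dA := by
  rw [lint_dA, lint_dA]
  refine mul_le_mul' le_rfl ?_
  have hR0 : (R : ℂ) ≠ 0 := by exact_mod_cast hR.ne'
  have hinj : InjOn (fun u : ℂ => z + R * u) (ball (0:ℂ) 1) := by
    intro x _ y _ hxy
    simpa [hR0] using hxy
  have hd' : ∀ u : ℂ, HasDerivAt (fun u : ℂ => z + R * u) (R : ℂ) u := by
    intro u
    simpa using ((hasDerivAt_id u).const_mul (R : ℂ)).const_add z
  have h := lintegral_image_eq_lintegral_abs_det_fderiv_mul volume measurableSet_ball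
    (f := fun u : ℂ => z + R * u) (s := ball (0:ℂ) 1)
    (f' := fun _ => (ContinuousLinearMap.toSpanSingleton ℂ (R : ℂ)).restrictScalars ℝ)
    (fun u _ => (((hd' u).hasFDerivAt).restrictScalars ℝ).hasFDerivWithinAt) hinj F
  have hd : ((ContinuousLinearMap.toSpanSingleton ℂ (R : ℂ)).restrictScalars ℝ).det = R ^ 2 := by
    rw [ContinuousLinearMap.det, ContinuousLinearMap.coe_restrictScalars,
      LinearMap.det_restrictScalars]
    simp [Algebra.norm_complex_eq, Complex.normSq_eq_norm_sq]
  simp only [hd, abs_of_nonneg (sq_nonneg R)] at h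
  rw [← h]
  refine lintegral_mono_set ?_
  rintro _ ⟨u, hu, rfl⟩
  rw [mem_ball_zero_iff] at hu ⊢
  calc ‖z + R * u‖ ≤ ‖z‖ + ‖(R:ℂ) * u‖ := norm_add_le _ _
    _ = ‖z‖ + R * ‖u‖ := by rw [norm_mul, Complex.norm_real, Real.norm_of_nonneg hR.le]
    _ < ‖z‖ + R := by nlinarith
    _ ≤ 1 := hz

theorem besov_bloch (p : ℝ) (hp1 : 1 < p) (hp2 : p ≤ 2) (f : ℂ → ℂ) (hf : f ∈ Besov p) :
    ∃ M : ℝ, 0 < M ∧ ∀ z : ℂ, ‖z‖ < 1 → (1 - ‖z‖) * ‖deriv f z‖ ≤ M := by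
  obtain ⟨hf, hB⟩ := hf
  set B := ∫⁻ z in ball (0:ℂ) 1, ENNReal.ofReal ((1 - ‖z‖) ^ (p - 2) * ‖deriv f z‖ ^ p) ∂dA with hBdef
  have hdm := measurable_deriv f
  have hfin : dA (ball (0:ℂ) 1) + ENNReal.ofReal 8 * B ≠ ⊤ :=
    (ENNReal.add_lt_top.2 ⟨dA_ball_lt, ENNReal.mul_lt_top ENNReal.ofReal_lt_top hB⟩).ne
  refine ⟨(dA (ball (0:ℂ) 1) + ENNReal.ofReal 8 * B).toReal + 1, by positivity, ?_⟩
  intro z hz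
  suffices h : ENNReal.ofReal ((1 - ‖z‖) * ‖deriv f z‖) ≤ dA (ball (0:ℂ) 1) + ENNReal.ofReal 8 * B by
    have := (ENNReal.ofReal_le_iff_le_toReal hfin).1 h
    linarith
  set δ := 1 - ‖z‖ with hδ
  have hδ0 : 0 < δ := by linarith
  have hmem : ∀ u ∈ ball (0:ℂ) 1, ‖z + (δ/2 : ℝ) * u‖ < 1 ∧ 1 - ‖z + (δ/2 : ℝ) * u‖ ≤ 2 * δ := by
    intro u hu
    rw [mem_ball_zero_iff] at hu
    have h1 : ‖((δ/2 : ℝ) : ℂ) * u‖ ≤ δ / 2 := by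
      rw [norm_mul, Complex.norm_real, Real.norm_of_nonneg (by positivity)]
      nlinarith
    have h2 := norm_add_le z (((δ/2 : ℝ) : ℂ) * u)
    have h3 := norm_sub_le (z + ((δ/2 : ℝ) : ℂ) * u) (((δ/2 : ℝ) : ℂ) * u)
    rw [add_sub_cancel_right] at h3
    constructor <;> linarith
  have hF : HolOn (fun u => deriv f (z + (δ/2 : ℝ) * u)) := by
    refine DifferentiableOn.comp (g := deriv f) (t := ball 0 1) hf.deriv_hol (by fun_prop) ?_
    intro v hv
    exact mem_ball_zero_iff.2 (hmem v hv).1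
  have hmv := meanval _ hF (by fun_prop)
  simp only [mul_zero, add_zero] at hmv
  rw [ENNReal.ofReal_mul hδ0.le]
  calc ENNReal.ofReal δ * ENNReal.ofReal ‖deriv f z‖
      ≤ ENNReal.ofReal δ * ∫⁻ u in ball (0:ℂ) 1, ENNReal.ofReal ‖deriv f (z + (δ/2 : ℝ) * u)‖ ∂dA :=
        mul_le_mul' le_rfl hmv
    _ = ∫⁻ u in ball (0:ℂ) 1, ENNReal.ofReal δ * ENNReal.ofReal ‖deriv f (z + (δ/2 : ℝ) * u)‖ ∂dA :=
        (lintegral_const_mul' _ _ ENNReal.ofReal_ne_top).symm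
    _ ≤ ∫⁻ u in ball (0:ℂ) 1, (1 + ENNReal.ofReal 8 * (ENNReal.ofReal ((δ/2)^2) *
          ENNReal.ofReal ((1 - ‖z + (δ/2 : ℝ) * u‖) ^ (p - 2) * ‖deriv f (z + (δ/2 : ℝ) * u)‖ ^ p))) ∂dA := by
        apply setLIntegral_mono' measurableSet_ball
        intro u hu
        obtain ⟨m1, m2⟩ := hmem u hu
        set y := z + (δ/2 : ℝ) * u
        set x := ‖deriv f y‖ with hx
        have hx0 : 0 ≤ x := norm_nonneg _
        have hy : 0 < 1 - ‖y‖ := by linarith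
        rw [← ENNReal.ofReal_mul (by positivity), ← ENNReal.ofReal_mul (by positivity),
          ← ENNReal.ofReal_mul (by positivity), ← ENNReal.ofReal_one,
          ← ENNReal.ofReal_add (by positivity) (by positivity)]
        apply ENNReal.ofReal_le_ofReal
        have h1 : δ * x ≤ 1 + (δ * x) ^ p := by
          have hn : 0 ≤ δ * x := by positivity
          rcases le_total (δ * x) 1 with h | h
          · have : 0 ≤ (δ * x) ^ p := by positivity
            linarith
          · have := Real.rpow_le_rpow_of_exponent_le h hp1.le
            rw [Real.rpow_one] at this
            linarith
        have h2 : δ ^ p ≤ 8 * ((δ/2)^2 * (1 - ‖y‖) ^ (p - 2)) := by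
          have e1 : δ ^ p = δ ^ 2 * δ ^ (p - 2) := by
            rw [← Real.rpow_natCast δ 2, ← Real.rpow_add hδ0]; congr 1; push_cast; ring
          have e2 : δ ^ (p - 2) ≤ ((1 - ‖y‖) / 2) ^ (p - 2) :=
            Real.rpow_le_rpow_of_nonpos (by positivity) (by linarith) (by linarith)
          have e3 : ((1 - ‖y‖) / 2) ^ (p - 2) = (1 - ‖y‖) ^ (p - 2) * 2 ^ (2 - p) := by
            rw [Real.div_rpow hy.le (by norm_num), div_eq_mul_inv, ← Real.rpow_neg (by norm_num)]
            congr 2; ring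
          have e4 : (2:ℝ) ^ (2 - p) ≤ 2 := by
            calc (2:ℝ) ^ (2 - p) ≤ 2 ^ (1:ℝ) :=
                  Real.rpow_le_rpow_of_exponent_le (by norm_num) (by linarith)
              _ = 2 := Real.rpow_one _
          rw [e1]
          have e5 : 0 < (1 - ‖y‖) ^ (p - 2) := by positivity
          have : δ ^ (p - 2) ≤ (1 - ‖y‖) ^ (p - 2) * 2 := by
            rw [e3] at e2; nlinarith
          nlinarith [sq_pos_of_pos hδ0]
        rw [Real.mul_rpow hδ0.le hx0] at h1
        have h3 : δ ^ p * x ^ p ≤ 8 * ((δ/2)^2 * (1 - ‖y‖) ^ (p - 2)) * x ^ p :=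
          mul_le_mul_of_nonneg_right h2 (by positivity)
        linarith
    _ = dA (ball (0:ℂ) 1) + ENNReal.ofReal 8 * ∫⁻ u in ball (0:ℂ) 1, (ENNReal.ofReal ((δ/2)^2) *
          ENNReal.ofReal ((1 - ‖z + (δ/2 : ℝ) * u‖) ^ (p - 2) * ‖deriv f (z + (δ/2 : ℝ) * u)‖ ^ p)) ∂dA := by
        rw [lintegral_add_left measurable_const, lintegral_const_mul' _ _ ENNReal.ofReal_ne_top]
        simp
    _ ≤ _ := by
        refine add_le_add le_rfl (mul_le_mul' le_rfl ?_)
        exact affine_var z (δ/2) (by positivity) (by linarith)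
          (fun v => ENNReal.ofReal ((1 - ‖v‖) ^ (p - 2) * ‖deriv f v‖ ^ p))

theorem besov_dir (p : ℝ) (hp1 : 1 < p) (hp2 : p ≤ 2) (f : ℂ → ℂ) (hf : f ∈ Besov p) :
    Dir f < ⊤ := by
  obtain ⟨M, hM, h⟩ := besov_bloch p hp1 hp2 f hf
  obtain ⟨hf, hB⟩ := hf
  have : Dir f ≤ ENNReal.ofReal (M ^ (2 - p)) * ∫⁻ z in ball (0:ℂ) 1,
      ENNReal.ofReal ((1 - ‖z‖) ^ (p - 2) * ‖deriv f z‖ ^ p) ∂dA := by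
    rw [← lintegral_const_mul' _ _ ENNReal.ofReal_ne_top]
    apply setLIntegral_mono' measurableSet_ball
    intro z hz
    rw [mem_ball_zero_iff] at hz
    have hδ : 0 < 1 - ‖z‖ := by linarith
    rw [← ENNReal.ofReal_mul (by positivity)]
    apply ENNReal.ofReal_le_ofReal
    have h1 := h z hz
    set x := ‖deriv f z‖
    have hx0 : 0 ≤ x := norm_nonneg _
    have e1 : x ^ 2 = x ^ (2 - p) * x ^ p := by
      rw [← Real.rpow_add_of_nonneg hx0 (by linarith) (by linarith), ← Real.rpow_natCast]
      congr 1; push_cast; ring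
    have e2 : x ^ (2 - p) ≤ (M / (1 - ‖z‖)) ^ (2 - p) :=
      Real.rpow_le_rpow hx0 (by rw [le_div_iff₀ hδ]; linarith) (by linarith)
    have e3 : (M / (1 - ‖z‖)) ^ (2 - p) = M ^ (2 - p) * (1 - ‖z‖) ^ (p - 2) := by
      rw [Real.div_rpow hM.le hδ.le, div_eq_mul_inv, ← Real.rpow_neg hδ.le, neg_sub]
    rw [e1, ← mul_assoc, ← e3]
    exact mul_le_mul_of_nonneg_right e2 (by positivity)
  exact this.trans_lt (ENNReal.mul_lt_top ENNReal.ofReal_lt_top hB)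

theorem Tg_deriv (g f : ℂ → ℂ) (hg : HolOn g) (hf : HolOn f) :
    HolOn (Tg g f) ∧ ∀ z : ℂ, ‖z‖ < 1 → deriv (Tg g f) z = deriv g z * f z := by
  have hh : DifferentiableOn ℂ (fun z => deriv g z * f z) (ball (0:ℂ) 1) :=
    DifferentiableOn.mul hg.deriv_hol hf
  obtain ⟨P, hP⟩ := hh.isExactOn_ball
  have key : ∀ z ∈ ball (0:ℂ) 1, Tg g f z = P z - P 0 := by
    intro z hz
    have hmem : ∀ t : ℝ, t ∈ Icc (0:ℝ) 1 → (t:ℂ) * z ∈ ball (0:ℂ) 1 := by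
      intro t ht
      rw [mem_ball_zero_iff] at hz ⊢
      rw [norm_mul, Complex.norm_real, Real.norm_of_nonneg ht.1]
      nlinarith [ht.2, norm_nonneg z]
    have hd : ∀ t : ℝ, t ∈ uIcc (0:ℝ) 1 → HasDerivAt (fun t : ℝ => P ((t:ℂ) * z))
        (deriv g ((t:ℂ) * z) * f ((t:ℂ) * z) * z) t := by
      intro t ht
      rw [uIcc_of_le zero_le_one] at ht
      have h1 : HasDerivAt (fun t : ℝ => (t:ℂ) * z) z t := by
        simpa using (Complex.ofRealCLM.hasDerivAt (x := t)).mul_const z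
      exact (hP _ (hmem t ht)).comp t h1
    have hc : ContinuousOn (fun t : ℝ => deriv g ((t:ℂ) * z) * f ((t:ℂ) * z) * z) (uIcc (0:ℝ) 1) := by
      rw [uIcc_of_le zero_le_one]
      refine ContinuousOn.mul ?_ continuousOn_const
      exact hh.continuousOn.comp (f := fun t : ℝ => (t:ℂ) * z) (by fun_prop) hmem
    have := intervalIntegral.integral_eq_sub_of_hasDerivAt hd hc.intervalIntegrable
    rw [intervalIntegral.integral_mul_const] at this
    simp only [Complex.ofReal_one, one_mul, Complex.ofReal_zero, zero_mul] at this
    rw [Tg, mul_comm, this]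
  have hD : ∀ z ∈ ball (0:ℂ) 1, HasDerivAt (Tg g f) (deriv g z * f z) z := by
    intro z hz
    refine ((hP z hz).sub_const (P 0)).congr_of_eventuallyEq ?_
    filter_upwards [isOpen_ball.mem_nhds hz] with w hw
    exact key w hw
  exact ⟨fun z hz => (hD z hz).differentiableAt.differentiableWithinAt,
    fun z hz => (hD z (mem_ball_zero_iff.2 hz)).deriv⟩


theorem norm_sq_split (x y : ℂ) : ‖x‖ ^ 2 ≤ 2 * ‖y‖ ^ 2 + 2 * ‖x - y‖ ^ 2 := by
  have h : ‖x‖ ≤ ‖y‖ + ‖x - y‖ := by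
    calc ‖x‖ = ‖y + (x - y)‖ := by congr 1; ring
      _ ≤ _ := norm_add_le _ _
  nlinarith [norm_nonneg x, norm_nonneg y, norm_nonneg (x - y), sq_nonneg (‖y‖ - ‖x - y‖)]

theorem part_two (p s : ℝ) (hp1 : 1 < p) (hp2 : p ≤ 2)
    (hs0 : 0 < s) (hs1 : s < 1) (g : ℂ → ℂ) (hg : HolOn g) (α : ℝ) (hα : 1 / 2 < α)
    (hgq : g ∈ QsLog s α) : MapsInto (Tg g) (Besov p) (Qs s) := by
  intro f hfB
  have hD := besov_dir p hp1 hp2 f hfB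
  have hf : HolOn f := hfB.1
  obtain ⟨hT, hTd⟩ := Tg_deriv g f hg hf
  obtain ⟨-, hM⟩ := hgq
  set M := ⨆ a ∈ Metric.ball (0:ℂ) 1,
      (ENNReal.ofReal ((Real.log (2 / (1 - ‖a‖))) ^ (2 * α)) *
        ∫⁻ z in Metric.ball (0:ℂ) 1,
          ENNReal.ofReal (‖deriv g z‖ ^ 2 *
            (1 - ‖phi a z‖ ^ 2) ^ s) ∂dA) with hMdef
  have hMa : ∀ a : ℂ, ‖a‖ < 1 → ENNReal.ofReal (LL a ^ (2 * α)) * QI s g a ≤ M := by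
    intro a ha
    rw [hMdef]
    exact le_iSup₂_of_le a (mem_ball_zero_iff.2 ha) le_rfl
  have hl2 : 0 < Real.log 2 := Real.log_pos (by norm_num)
  set M1 := (ENNReal.ofReal (Real.log 2 ^ (2 * α)))⁻¹ * M with hM1
  have hc0 : ENNReal.ofReal (Real.log 2 ^ (2 * α)) ≠ 0 := by
    have : 0 < Real.log 2 ^ (2 * α) := by positivity
    simpa using this
  have hM1t : M1 < ⊤ := ENNReal.mul_lt_top (by simpa using pos_iff_ne_zero.2 hc0) hM
  have hQ : ∀ u : ℂ, ‖u‖ < 1 → QI s g u ≤ M1 := by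
    intro u hu
    calc QI s g u = (ENNReal.ofReal (Real.log 2 ^ (2 * α)))⁻¹ *
          (ENNReal.ofReal (Real.log 2 ^ (2 * α)) * QI s g u) := by
          rw [← mul_assoc, ENNReal.inv_mul_cancel hc0 ENNReal.ofReal_ne_top, one_mul]
      _ ≤ M1 := by
          refine mul_le_mul' le_rfl (le_trans (mul_le_mul' (ENNReal.ofReal_le_ofReal ?_) le_rfl) (hMa u hu))
          exact Real.rpow_le_rpow hl2.le (LL_ge u hu) (by linarith)
  obtain ⟨C, hC, hF⟩ := lemF s hs0 hs1
  obtain ⟨C', hC', hG⟩ := growth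
  refine ⟨hT, ?_⟩
  set K : ℝ≥0∞ := ENNReal.ofReal (2 * ‖f 0‖ ^ 2 / Real.log 2) + ENNReal.ofReal (2 * C') * Dir f with hK
  have hKt : K < ⊤ := ENNReal.add_lt_top.2 ⟨ENNReal.ofReal_lt_top,
    ENNReal.mul_lt_top ENNReal.ofReal_lt_top hD⟩
  have hfa : ∀ a : ℂ, ‖a‖ < 1 → ENNReal.ofReal (‖f a‖ ^ 2) ≤ ENNReal.ofReal (LL a) * K := by
    intro a ha
    have hLp := LL_pos a ha
    calc ENNReal.ofReal (‖f a‖ ^ 2) ≤ ENNReal.ofReal (2 * ‖f 0‖ ^ 2 + 2 * ‖f a - f 0‖ ^ 2) :=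
          ENNReal.ofReal_le_ofReal (norm_sq_split _ _)
      _ = ENNReal.ofReal (2 * ‖f 0‖ ^ 2) + ENNReal.ofReal 2 * ENNReal.ofReal (‖f a - f 0‖ ^ 2) := by
          rw [ENNReal.ofReal_add (by positivity) (by positivity), ENNReal.ofReal_mul (by norm_num : (0:ℝ) ≤ 2)
            (q := ‖f a - f 0‖ ^ 2)]
      _ ≤ ENNReal.ofReal (LL a * (2 * ‖f 0‖ ^ 2 / Real.log 2)) +
          ENNReal.ofReal 2 * (ENNReal.ofReal (C' * LL a) * Dir f) := by
          refine add_le_add (ENNReal.ofReal_le_ofReal ?_) (mul_le_mul' le_rfl (hG f hf a ha))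
          rw [← mul_div_assoc, le_div_iff₀ hl2, mul_comm]
          exact mul_le_mul_of_nonneg_right (LL_ge a ha) (by positivity)
      _ = _ := by
          rw [hK, mul_add, ← ENNReal.ofReal_mul hLp.le, ← mul_assoc, ← mul_assoc,
            ← ENNReal.ofReal_mul (by norm_num), ← ENNReal.ofReal_mul hLp.le]
          congr 3; ring
  have hLL : ∀ a : ℂ, ‖a‖ < 1 → LL a ≤ Real.log 2 ^ (1 - 2 * α) * LL a ^ (2 * α) := by
    intro a ha
    have hLp := LL_pos a ha
    have h1 : LL a ^ (1 - 2 * α) ≤ Real.log 2 ^ (1 - 2 * α) :=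
      Real.rpow_le_rpow_of_nonpos hl2 (LL_ge a ha) (by linarith)
    calc LL a = LL a ^ (1 - 2 * α) * LL a ^ (2 * α) := by
          rw [← Real.rpow_add hLp]; simp
      _ ≤ _ := mul_le_mul_of_nonneg_right h1 (by positivity)
  have hbound : ∀ a ∈ ball (0:ℂ) 1, QI s (Tg g f) a ≤
      2 * (ENNReal.ofReal (Real.log 2 ^ (1 - 2 * α)) * K * M) + 2 * (C * (M1 * Dir f)) := by
    intro a ha
    have ha := mem_ball_zero_iff.1 ha
    have hdg := measurable_deriv g
    have hconj := Complex.continuous_conj.measurable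
    have hphi : Measurable fun z : ℂ => ‖phi a z‖ := by
      unfold phi; fun_prop
    calc QI s (Tg g f) a ≤ ∫⁻ z in ball (0:ℂ) 1,
          ((2 * ENNReal.ofReal (‖f a‖ ^ 2)) * ENNReal.ofReal (‖deriv g z‖ ^ 2 * (1 - ‖phi a z‖ ^ 2) ^ s) +
           2 * ENNReal.ofReal (‖f z - f a‖ ^ 2 * (‖deriv g z‖ ^ 2 * (1 - ‖phi a z‖ ^ 2) ^ s))) ∂dA := by
          apply setLIntegral_mono' measurableSet_ball
          intro z hz
          have hz := mem_ball_zero_iff.1 hz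
          have hpp := one_sub_phi_pos a z ha hz
          rw [hTd z hz, show (2:ℝ≥0∞) = ENNReal.ofReal 2 by simp, ← ENNReal.ofReal_mul (by norm_num),
            ← ENNReal.ofReal_mul (by positivity), ← ENNReal.ofReal_mul (by norm_num),
            ← ENNReal.ofReal_add (by positivity) (by positivity)]
          apply ENNReal.ofReal_le_ofReal
          rw [norm_mul, mul_pow]
          have h1 := norm_sq_split (f z) (f a)
          have h2 : 0 ≤ ‖deriv g z‖ ^ 2 * (1 - ‖phi a z‖ ^ 2) ^ s := by positivity
          nlinarith
      _ = (2 * ENNReal.ofReal (‖f a‖ ^ 2)) * QI s g a + 2 * ∫⁻ z in ball (0:ℂ) 1,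
           ENNReal.ofReal (‖f z - f a‖ ^ 2 * (‖deriv g z‖ ^ 2 * (1 - ‖phi a z‖ ^ 2) ^ s)) ∂dA := by
          rw [lintegral_add_left (by fun_prop), lintegral_const_mul' _ _
            (ENNReal.mul_ne_top (by simp) ENNReal.ofReal_ne_top), lintegral_const_mul' _ _ (by simp), QI]
      _ ≤ _ := by
          refine add_le_add ?_ (mul_le_mul' le_rfl (hF f g hf M1 hQ a ha))
          rw [mul_assoc]
          refine mul_le_mul' le_rfl ?_
          calc _ ≤ ENNReal.ofReal (Real.log 2 ^ (1 - 2 * α) * LL a ^ (2 * α)) * K * QI s g a :=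
                mul_le_mul' ((hfa a ha).trans (mul_le_mul' (ENNReal.ofReal_le_ofReal (hLL a ha)) le_rfl)) le_rfl
            _ = ENNReal.ofReal (Real.log 2 ^ (1 - 2 * α)) * K * (ENNReal.ofReal (LL a ^ (2 * α)) * QI s g a) := by
                rw [ENNReal.ofReal_mul (by positivity)]; ring
            _ ≤ _ := mul_le_mul' le_rfl (hMa a ha)
  refine lt_of_le_of_lt (iSup₂_le hbound) ?_
  refine ENNReal.add_lt_top.2 ⟨?_, ?_⟩
  · exact ENNReal.mul_lt_top (by simp) (ENNReal.mul_lt_top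
      (ENNReal.mul_lt_top ENNReal.ofReal_lt_top hKt) hM)
  · exact ENNReal.mul_lt_top (by simp) (ENNReal.mul_lt_top hC.lt_top (ENNReal.mul_lt_top hM1t hD))


theorem hump_sum (p : ℝ) (hp : 1 ≤ p) (X : ℕ → ℝ≥0∞) :
    (∑' k : ℕ, 2⁻¹ ^ k * (2⁻¹ ^ k * X k)) ^ p ≤ 2 ^ p * ∑' k : ℕ, 2⁻¹ ^ k * X k ^ p := by
  have hp0 : 0 < p := by linarith
  set S := ∑' k : ℕ, 2⁻¹ ^ k * X k ^ p with hS
  have h1 : ∀ k : ℕ, 2⁻¹ ^ k * X k ≤ S ^ p⁻¹ := by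
    intro k
    rw [ENNReal.le_rpow_inv_iff hp0, ENNReal.mul_rpow_of_nonneg _ _ hp0.le]
    calc _ ≤ 2⁻¹ ^ k * X k ^ p := by
          refine mul_le_mul' (ENNReal.rpow_le_self_of_le_one ?_ hp) le_rfl
          exact pow_le_one' (by simp) k
      _ ≤ S := ENNReal.le_tsum k
  have h2 : ∑' k : ℕ, 2⁻¹ ^ k * (2⁻¹ ^ k * X k) ≤ 2 * S ^ p⁻¹ := by
    calc _ ≤ ∑' k : ℕ, 2⁻¹ ^ k * S ^ p⁻¹ := ENNReal.tsum_le_tsum fun k => mul_le_mul' le_rfl (h1 k)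
      _ = 2 * S ^ p⁻¹ := by rw [ENNReal.tsum_mul_right, ENNReal.tsum_geometric_two]
  calc _ ≤ (2 * S ^ p⁻¹) ^ p := ENNReal.rpow_le_rpow h2 hp0.le
    _ = 2 ^ p * S := by
      rw [ENNReal.mul_rpow_of_nonneg _ _ hp0.le, ← ENNReal.rpow_mul, inv_mul_cancel₀ hp0.ne',
        ENNReal.rpow_one]

theorem hump (p : ℝ) (hp1 : 1 < p) (F : ℕ → ℂ → ℂ) (hF : ∀ k, HolOn (F k))
    (hre : ∀ k z, ‖z‖ < 1 → 0 ≤ (F k z).re)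
    (hb : ∀ r : ℝ, r < 1 → ∃ B : ℝ, ∀ k z, ‖z‖ < r → ‖F k z‖ ≤ B)
    (CB : ℝ≥0∞) (hCB : CB ≠ ⊤)
    (hB : ∀ k, ∫⁻ z in ball (0:ℂ) 1,
      ENNReal.ofReal ((1 - ‖z‖) ^ (p - 2) * ‖deriv (F k) z‖ ^ p) ∂dA ≤ CB) :
    ∃ f ∈ Besov p, ∀ k z, ‖z‖ < 1 → (1/4:ℝ) ^ k * (F k z).re ≤ ‖f z‖ := by
  set G : ℕ → ℂ → ℂ := fun k z => ((1/4:ℝ) ^ k : ℝ) * F k z with hG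
  set f : ℂ → ℂ := fun z => ∑' k, G k z with hf
  have hGh : ∀ k, HolOn (G k) := fun k => DifferentiableOn.const_mul (hF k) _
  have hbound : ∀ r : ℝ, r < 1 → ∃ u : ℕ → ℝ, Summable u ∧ ∀ k z, z ∈ ball (0:ℂ) r → ‖G k z‖ ≤ u k := by
    intro r hr
    obtain ⟨B, hB⟩ := hb r hr
    refine ⟨fun k => (1/4:ℝ) ^ k * B, (summable_geometric_of_lt_one (by norm_num) (by norm_num)).mul_right B, ?_⟩
    intro k z hz
    simp only [hG]
    rw [norm_mul, Complex.norm_real, Real.norm_of_nonneg (by positivity)]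
    exact mul_le_mul_of_nonneg_left (hB k z (mem_ball_zero_iff.1 hz)) (by positivity)
  have hr : ∀ z : ℂ, ‖z‖ < 1 → ∃ r : ℝ, ‖z‖ < r ∧ r < 1 := fun z hz => exists_between hz
  have hGr : ∀ k (r : ℝ), r < 1 → DifferentiableOn ℂ (G k) (ball (0:ℂ) r) := fun k r hr =>
    DifferentiableOn.mono (hGh k) (ball_subset_ball hr.le)
  have hfh : HolOn f := by
    intro z hz
    obtain ⟨r, h1, h2⟩ := hr z (mem_ball_zero_iff.1 hz)
    obtain ⟨u, hu, hu2⟩ := hbound r h2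
    have := Complex.differentiableOn_tsum_of_summable_norm hu (fun k => hGr k r h2) isOpen_ball hu2
    exact (this.differentiableAt (isOpen_ball.mem_nhds (mem_ball_zero_iff.2 h1))).differentiableWithinAt
  have hfd : ∀ z : ℂ, ‖z‖ < 1 → HasSum (fun k => deriv (G k) z) (deriv f z) := by
    intro z hz
    obtain ⟨r, h1, h2⟩ := hr z hz
    obtain ⟨u, hu, hu2⟩ := hbound r h2
    exact Complex.hasSum_deriv_of_summable_norm hu (fun k => hGr k r h2) isOpen_ball hu2 (mem_ball_zero_iff.2 h1)
  have hsum : ∀ z : ℂ, ‖z‖ < 1 → Summable (fun k => G k z) := by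
    intro z hz
    obtain ⟨r, h1, h2⟩ := hr z hz
    obtain ⟨u, hu, hu2⟩ := hbound r h2
    exact Summable.of_norm_bounded hu (fun k => hu2 k z (mem_ball_zero_iff.2 h1))
  refine ⟨f, ⟨hfh, ?_⟩, ?_⟩
  · have hGd : ∀ k z, ‖z‖ < 1 → ENNReal.ofReal ‖deriv (G k) z‖ =
        2⁻¹ ^ k * (2⁻¹ ^ k * ENNReal.ofReal ‖deriv (F k) z‖) := by
      intro k z hz
      have : deriv (G k) z = ((1/4:ℝ) ^ k : ℝ) * deriv (F k) z :=
        (((hF k).hasDerivAt hz).const_mul _).deriv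
      rw [this, norm_mul, Complex.norm_real, Real.norm_of_nonneg (by positivity),
        ENNReal.ofReal_mul (by positivity), ← mul_assoc, ← mul_pow]
      congr 1
      rw [ENNReal.ofReal_pow (by norm_num)]
      congr 1
      have h2 : (2:ℝ≥0∞)⁻¹ = ENNReal.ofReal (1/2) := by
        rw [one_div, ENNReal.ofReal_inv_of_pos (by norm_num)]; simp
      rw [h2, ← ENNReal.ofReal_mul (by norm_num)]
      norm_num
    have hpt : ∀ z ∈ ball (0:ℂ) 1, ENNReal.ofReal ((1 - ‖z‖) ^ (p - 2) * ‖deriv f z‖ ^ p) ≤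
        2 ^ p * ∑' k : ℕ, 2⁻¹ ^ k * ENNReal.ofReal ((1 - ‖z‖) ^ (p - 2) * ‖deriv (F k) z‖ ^ p) := by
      intro z hz
      have hz := mem_ball_zero_iff.1 hz
      have hδ : 0 < 1 - ‖z‖ := by linarith
      have e0 : ENNReal.ofReal ‖deriv f z‖ ≤ ∑' k : ℕ, 2⁻¹ ^ k * (2⁻¹ ^ k * ENNReal.ofReal ‖deriv (F k) z‖) := by
        rw [← (hfd z hz).tsum_eq, ofReal_norm]
        refine enorm_tsum_le_tsum_enorm.trans (le_of_eq ?_)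
        congr 1; ext k
        rw [← hGd k z hz, ofReal_norm]
      calc _ = ENNReal.ofReal ((1 - ‖z‖) ^ (p - 2)) * (ENNReal.ofReal ‖deriv f z‖) ^ p := by
            rw [ENNReal.ofReal_rpow_of_nonneg (norm_nonneg _) (by linarith), ENNReal.ofReal_mul (by positivity)]
        _ ≤ ENNReal.ofReal ((1 - ‖z‖) ^ (p - 2)) *
            (2 ^ p * ∑' k : ℕ, 2⁻¹ ^ k * (ENNReal.ofReal ‖deriv (F k) z‖) ^ p) := by
            refine mul_le_mul' le_rfl ?_
            exact (ENNReal.rpow_le_rpow e0 (by linarith)).trans (hump_sum p hp1.le _)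
        _ = _ := by
            rw [mul_left_comm, ← ENNReal.tsum_mul_left]
            congr 2; ext k
            rw [ENNReal.ofReal_rpow_of_nonneg (norm_nonneg _) (by linarith), mul_left_comm,
              ← ENNReal.ofReal_mul (by positivity)]
    have h2p : (2:ℝ≥0∞) ^ p ≠ ⊤ := ENNReal.rpow_ne_top_of_nonneg (by linarith) (by simp)
    have hdm : ∀ k, Measurable (deriv (F k)) := fun k => measurable_deriv _
    have : ∫⁻ z in ball (0:ℂ) 1, ENNReal.ofReal ((1 - ‖z‖) ^ (p - 2) * ‖deriv f z‖ ^ p) ∂dA ≤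
        2 ^ p * (2 * CB) := by
      calc _ ≤ ∫⁻ z in ball (0:ℂ) 1, 2 ^ p * ∑' k : ℕ, 2⁻¹ ^ k *
            ENNReal.ofReal ((1 - ‖z‖) ^ (p - 2) * ‖deriv (F k) z‖ ^ p) ∂dA :=
            setLIntegral_mono' measurableSet_ball hpt
        _ = 2 ^ p * ∑' k : ℕ, 2⁻¹ ^ k * ∫⁻ z in ball (0:ℂ) 1,
            ENNReal.ofReal ((1 - ‖z‖) ^ (p - 2) * ‖deriv (F k) z‖ ^ p) ∂dA := by
            rw [lintegral_const_mul' _ _ h2p, lintegral_tsum]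
            · congr 2; ext k
              rw [lintegral_const_mul' _ _ (by simp)]
            · intro k
              have := hdm k
              fun_prop
        _ ≤ 2 ^ p * ∑' k : ℕ, 2⁻¹ ^ k * CB :=
            mul_le_mul' le_rfl (ENNReal.tsum_le_tsum fun k => mul_le_mul' le_rfl (hB k))
        _ = _ := by rw [ENNReal.tsum_mul_right, ENNReal.tsum_geometric_two]
    exact this.trans_lt (ENNReal.mul_lt_top h2p.lt_top (ENNReal.mul_lt_top (by simp) hCB.lt_top))
  · intro k z hz
    have hs := (Complex.hasSum_re (hsum z hz).hasSum)
    have hk : (G k z).re ≤ (f z).re := by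
      refine le_hasSum hs k ?_
      intro j _
      simp only [hG, Complex.re_ofReal_mul]
      exact mul_nonneg (by positivity) (hre j z hz)
    calc (1/4:ℝ) ^ k * (F k z).re = (G k z).re := by simp only [hG, Complex.re_ofReal_mul]
      _ ≤ (f z).re := hk
      _ ≤ ‖f z‖ := Complex.re_le_norm _

/-- the test functions -/
noncomputable def tf (p : ℝ) (a z : ℂ) : ℂ :=
  ((LL a ^ (-(1/p)) : ℝ) : ℂ) * ((Real.log 4 : ℝ) - Complex.log (1 - (starRingEnd ℂ) a * z))

theorem slit (a z : ℂ) (ha : ‖a‖ < 1) (hz : ‖z‖ < 1) : 1 - (starRingEnd ℂ) a * z ∈ Complex.slitPlane := by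
  left
  have h1 := Complex.re_le_norm ((starRingEnd ℂ) a * z)
  rw [norm_mul, Complex.norm_conj] at h1
  simp only [Complex.sub_re, Complex.one_re]
  nlinarith [norm_nonneg a, norm_nonneg z]

theorem tf_hasDeriv (p : ℝ) (a z : ℂ) (ha : ‖a‖ < 1) (hz : ‖z‖ < 1) :
    HasDerivAt (tf p a) (((LL a ^ (-(1/p)) : ℝ) : ℂ) * ((starRingEnd ℂ) a / (1 - (starRingEnd ℂ) a * z))) z := by
  have h1 : HasDerivAt (fun z => 1 - (starRingEnd ℂ) a * z) (-(starRingEnd ℂ) a) z := by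
    simpa using ((hasDerivAt_id z).const_mul ((starRingEnd ℂ) a)).const_sub 1
  have h2 := ((h1.clog (slit a z ha hz)).const_sub ((Real.log 4 : ℝ) : ℂ)).const_mul
    ((LL a ^ (-(1/p)) : ℝ) : ℂ)
  rw [neg_div, neg_neg] at h2
  exact h2

theorem tf_hol (p : ℝ) (a : ℂ) (ha : ‖a‖ < 1) : HolOn (tf p a) := fun z hz =>
  (tf_hasDeriv p a z ha (mem_ball_zero_iff.1 hz)).differentiableAt.differentiableWithinAt

theorem tf_re (p : ℝ) (a z : ℂ) :
    (tf p a z).re = LL a ^ (-(1/p)) * (Real.log 4 - Real.log ‖1 - (starRingEnd ℂ) a * z‖) := by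
  rw [tf, Complex.re_ofReal_mul, Complex.sub_re, Complex.ofReal_re, Complex.log_re]

theorem den_bd (a z : ℂ) (ha : ‖a‖ < 1) (hz : ‖z‖ < 1) :
    1 - ‖z‖ ≤ ‖1 - (starRingEnd ℂ) a * z‖ ∧ ‖1 - (starRingEnd ℂ) a * z‖ ≤ 2 := by
  have h1 := norm_sub_norm_le (1:ℂ) ((starRingEnd ℂ) a * z)
  have h2 := norm_sub_le (1:ℂ) ((starRingEnd ℂ) a * z)
  rw [norm_mul, Complex.norm_conj, norm_one] at h1 h2
  constructor <;> nlinarith [norm_nonneg a, norm_nonneg z]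

theorem tf_re_nonneg (p : ℝ) (a z : ℂ) (ha : ‖a‖ < 1) (hz : ‖z‖ < 1) : 0 ≤ (tf p a z).re := by
  rw [tf_re]
  have hL := LL_pos a ha
  obtain ⟨h1, h2⟩ := den_bd a z ha hz
  have : Real.log ‖1 - (starRingEnd ℂ) a * z‖ ≤ Real.log 4 :=
    Real.log_le_log (by linarith) (by linarith)
  exact mul_nonneg (by positivity) (by linarith)

theorem tf_re_self (p : ℝ) (a : ℂ) (ha : ‖a‖ < 1) : LL a ^ (1 - 1/p) ≤ (tf p a a).re := by
  rw [tf_re]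
  have hL := LL_pos a ha
  have e : LL a ^ (1 - 1/p) = LL a ^ (-(1/p)) * LL a := by
    rw [show 1 - 1/p = -(1/p) + 1 by ring, Real.rpow_add hL, Real.rpow_one]
  rw [e]
  refine mul_le_mul_of_nonneg_left ?_ (by positivity)
  have e2 : ‖1 - (starRingEnd ℂ) a * a‖ = 1 - ‖a‖ ^ 2 := by
    rw [← Complex.normSq_eq_conj_mul_self, Complex.normSq_eq_norm_sq]
    rw [← Complex.ofReal_one, ← Complex.ofReal_sub, Complex.norm_real, Real.norm_of_nonneg]
    nlinarith [norm_nonneg a]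
  have h1 : 0 < 1 - ‖a‖ := by linarith
  have h2 : 0 < 1 - ‖a‖ ^ 2 := by nlinarith [norm_nonneg a]
  rw [e2, LL, ← Real.log_div (by norm_num) h2.ne']
  apply Real.log_le_log (by positivity)
  rw [div_le_div_iff₀ h1 h2]
  nlinarith [norm_nonneg a]

theorem tf_bdd (p : ℝ) (hp : 1 < p) (r : ℝ) (hr : r < 1) : ∃ B : ℝ, ∀ a z : ℂ, ‖a‖ < 1 → ‖z‖ < r → ‖tf p a z‖ ≤ B := by
  refine ⟨Real.log 2 ^ (-(1/p)) * (Real.log 4 + (|Real.log (1 - r)| + Real.log 2 + π)), ?_⟩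
  intro a z ha hz
  have hl2 : 0 < Real.log 2 := Real.log_pos (by norm_num)
  have hl4 : 0 < Real.log 4 := Real.log_pos (by norm_num)
  have hL := LL_pos a ha
  obtain ⟨h1, h2⟩ := den_bd a z ha (hz.trans hr)
  rw [tf, norm_mul, Complex.norm_real, Real.norm_of_nonneg (by positivity)]
  refine mul_le_mul ?_ ?_ (norm_nonneg _) (by positivity)
  · refine Real.rpow_le_rpow_of_nonpos hl2 (LL_ge a ha) ?_
    have : 0 < 1 / p := by positivity
    linarith
  · refine (norm_sub_le _ _).trans ?_
    rw [Complex.norm_real, Real.norm_of_nonneg hl4.le]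
    refine add_le_add le_rfl ((Complex.norm_le_abs_re_add_abs_im _).trans ?_)
    rw [Complex.log_re, Complex.log_im]
    refine add_le_add ?_ (Complex.abs_arg_le_pi _)
    have g1 : Real.log (1 - r) ≤ Real.log ‖1 - (starRingEnd ℂ) a * z‖ :=
      Real.log_le_log (by linarith) (by linarith)
    have g2 : Real.log ‖1 - (starRingEnd ℂ) a * z‖ ≤ Real.log 2 :=
      Real.log_le_log (by linarith) (by linarith)
    rw [abs_le]
    have := neg_abs_le (Real.log (1 - r))
    have := abs_nonneg (Real.log (1 - r))
    constructor <;> linarith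

/-- `q`-Besov integral of the test function with parameter `p`. -/
theorem tf_int (p q : ℝ) (hp : 1 < p) (hq1 : 1 < q) (hq2 : q ≤ 2) (hpq : p ≤ q) : ∃ C : ℝ≥0∞, C ≠ ⊤ ∧ ∀ a : ℂ, ‖a‖ < 1 →
    ∫⁻ z in ball (0:ℂ) 1, ENNReal.ofReal ((1 - ‖z‖) ^ (q - 2) * ‖deriv (tf p a) z‖ ^ q) ∂dA ≤ C := by
  obtain ⟨C, hC, hK⟩ := K2 q hq1 hq2
  have hl2 : 0 < Real.log 2 := Real.log_pos (by norm_num)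
  have hpi : (ENNReal.ofReal π)⁻¹ ≠ ⊤ := by simp [Real.pi_pos]
  refine ⟨(ENNReal.ofReal π)⁻¹ * ENNReal.ofReal (C * Real.log 2 ^ (1 - q/p)),
    ENNReal.mul_ne_top hpi ENNReal.ofReal_ne_top, ?_⟩
  intro a ha
  have hL := LL_pos a ha
  rw [lint_dA]
  refine mul_le_mul' le_rfl ?_
  calc _ ≤ ∫⁻ z in ball (0:ℂ) 1, ENNReal.ofReal (LL a ^ (-(q/p))) *
        ENNReal.ofReal ((1 - ‖z‖) ^ (q - 2) * ‖1 - a * (starRingEnd ℂ) z‖ ^ (-q)) := by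
        apply setLIntegral_mono' measurableSet_ball
        intro z hz
        have hz := mem_ball_zero_iff.1 hz
        have hδ : 0 < 1 - ‖z‖ := by linarith
        rw [← ENNReal.ofReal_mul (by positivity)]
        apply ENNReal.ofReal_le_ofReal
        have e3 : ‖1 - a * (starRingEnd ℂ) z‖ = ‖1 - (starRingEnd ℂ) a * z‖ := by
          rw [← Complex.norm_conj]; simp
        have hN : 0 < ‖1 - (starRingEnd ℂ) a * z‖ := norm_pos_iff.2 (den_ne a z ha hz)
        rw [(tf_hasDeriv p a z ha hz).deriv, e3, norm_mul, norm_div, Complex.norm_conj, Complex.norm_real,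
          Real.norm_of_nonneg (by positivity), Real.mul_rpow (by positivity) (by positivity),
          ← Real.rpow_mul hL.le, Real.div_rpow (norm_nonneg _) hN.le, Real.rpow_neg hN.le,
          show -(1/p) * q = -(q/p) by ring]
        have h1 : ‖a‖ ^ q ≤ 1 := Real.rpow_le_one (norm_nonneg _) ha.le (by linarith)
        have h2 : 0 ≤ LL a ^ (-(q/p)) * ((1 - ‖z‖) ^ (q - 2) * (‖1 - (starRingEnd ℂ) a * z‖ ^ q)⁻¹) := by
          positivity
        refine le_trans (le_of_eq ?_) (mul_le_of_le_one_right h2 h1)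
        ring
    _ = ENNReal.ofReal (LL a ^ (-(q/p))) * ∫⁻ z in ball (0:ℂ) 1,
        ENNReal.ofReal ((1 - ‖z‖) ^ (q - 2) * ‖1 - a * (starRingEnd ℂ) z‖ ^ (-q)) :=
        lintegral_const_mul' _ _ ENNReal.ofReal_ne_top
    _ ≤ ENNReal.ofReal (LL a ^ (-(q/p))) * ENNReal.ofReal (C * LL a) := mul_le_mul' le_rfl (hK a ha)
    _ ≤ _ := by
        rw [← ENNReal.ofReal_mul (by positivity)]
        apply ENNReal.ofReal_le_ofReal
        have e1 : LL a ^ (-(q/p)) * (C * LL a) = C * LL a ^ (1 - q/p) := by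
          rw [show 1 - q/p = -(q/p) + 1 by ring, Real.rpow_add hL, Real.rpow_one]; ring
        rw [e1]
        refine mul_le_mul_of_nonneg_left ?_ hC.le
        refine Real.rpow_le_rpow_of_nonpos hl2 (LL_ge a ha) ?_
        have : 1 ≤ q / p := by rw [le_div_iff₀ (by linarith)]; linarith
        linarith

theorem part_one (p p' s : ℝ) (hp1 : 1 < p) (hp2 : p ≤ 2) (hpp' : 1 / p + 1 / p' = 1)
    (hs0 : 0 < s) (hs1 : s < 1) (g : ℂ → ℂ) (hg : HolOn g)
    (hT : MapsInto (Tg g) (Besov p) (Qs s)) : g ∈ QsLog s (1 / p') := by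
  have hconj := Complex.continuous_conj.measurable
  have hdg := measurable_deriv g
  -- the general consequence of the hypothesis
  have hbd : ∀ f ∈ Besov p, ∃ M : ℝ≥0∞, M < ⊤ ∧ ∀ a : ℂ, ‖a‖ < 1 →
      ∫⁻ z in ball (0:ℂ) 1, ENNReal.ofReal (‖f z‖ ^ 2 * (‖deriv g z‖ ^ 2 * (1 - ‖phi a z‖ ^ 2) ^ s)) ∂dA ≤ M := by
    intro f hf
    refine ⟨_, (hT f hf).2, ?_⟩
    intro a ha
    refine le_trans (le_of_eq ?_) (le_iSup₂_of_le a (mem_ball_zero_iff.2 ha) le_rfl)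
    apply setLIntegral_congr_fun measurableSet_ball
    intro z hz
    dsimp only
    rw [(Tg_deriv g f hg hf.1).2 z (mem_ball_zero_iff.1 hz), norm_mul]
    congr 1; ring
  -- g in Q_s
  have h1B : (fun _ : ℂ => (1:ℂ)) ∈ Besov p := by
    refine ⟨differentiableOn_const _, ?_⟩
    have : ∀ z : ℂ, ENNReal.ofReal ((1 - ‖z‖) ^ (p - 2) * ‖deriv (fun _ : ℂ => (1:ℂ)) z‖ ^ p) = 0 := by
      intro z
      rw [deriv_const, norm_zero, Real.zero_rpow (by linarith), mul_zero, ENNReal.ofReal_zero]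
    simp only [this, lintegral_zero]
    exact ENNReal.zero_lt_top
  obtain ⟨M, hMt, hM⟩ := hbd _ h1B
  have hQ : ∀ u : ℂ, ‖u‖ < 1 → QI s g u ≤ M := by
    intro u hu
    simpa [QI] using hM u hu
  obtain ⟨CB, hCB, hB⟩ := tf_int p p hp1 hp1 hp2 le_rfl
  obtain ⟨CD, hCD, hD⟩ := tf_int p 2 hp1 (by norm_num) le_rfl hp2
  have hDir : ∀ a : ℂ, ‖a‖ < 1 → Dir (tf p a) ≤ CD := by
    intro a ha
    refine le_trans (le_of_eq ?_) (hD a ha)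
    unfold Dir
    congr 1; ext z
    rw [sub_self, Real.rpow_zero, one_mul, Real.rpow_two]
  set U : ℂ → ℝ≥0∞ := fun a => ∫⁻ z in ball (0:ℂ) 1,
    ENNReal.ofReal ((tf p a z).re ^ 2 * (‖deriv g z‖ ^ 2 * (1 - ‖phi a z‖ ^ 2) ^ s)) ∂dA with hU
  have hUb : ∃ N : ℝ≥0∞, N ≠ ⊤ ∧ ∀ a : ℂ, ‖a‖ < 1 → U a ≤ N := by
    by_contra hcon
    push Not at hcon
    have hch : ∀ k : ℕ, ∃ a : ℂ, ‖a‖ < 1 ∧ ENNReal.ofReal (16 ^ k * k) < U a := fun k =>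
      hcon _ ENNReal.ofReal_ne_top
    choose A hA1 hA2 using hch
    obtain ⟨f, hfB, hfk⟩ := hump p hp1 (fun k => tf p (A k)) (fun k => tf_hol p _ (hA1 k))
      (fun k z hz => tf_re_nonneg p _ z (hA1 k) hz)
      (fun r hr => by
        obtain ⟨B, hB⟩ := tf_bdd p hp1 r hr
        exact ⟨B, fun k z hz => hB _ z (hA1 k) hz⟩) CB hCB (fun k => hB _ (hA1 k))
    obtain ⟨M', hM't, hM'⟩ := hbd f hfB
    have hall : ∀ k : ℕ, (k : ℝ≥0∞) ≤ M' := by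
      intro k
      have h16 : (0:ℝ) < 16 ^ k := by positivity
      have h1 : U (A k) ≤ ENNReal.ofReal (16 ^ k) * M' := by
        refine le_trans ?_ (mul_le_mul' le_rfl (hM' (A k) (hA1 k)))
        rw [← lintegral_const_mul' _ _ ENNReal.ofReal_ne_top]
        apply setLIntegral_mono' measurableSet_ball
        intro z hz
        have hz := mem_ball_zero_iff.1 hz
        have hpp := one_sub_phi_pos (A k) z (hA1 k) hz
        rw [← ENNReal.ofReal_mul h16.le]
        apply ENNReal.ofReal_le_ofReal
        rw [← mul_assoc ((16:ℝ) ^ k)]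
        refine mul_le_mul_of_nonneg_right ?_ (by positivity)
        have h2 := hfk k z hz
        have h3 := tf_re_nonneg p (A k) z (hA1 k) hz
        have h4 : ((1/4:ℝ) ^ k * (tf p (A k) z).re) ^ 2 ≤ ‖f z‖ ^ 2 :=
          pow_le_pow_left₀ (mul_nonneg (by positivity) h3) h2 2
        have h5 : (16:ℝ) ^ k * ((1/4:ℝ) ^ k) ^ 2 = 1 := by
          rw [← pow_mul, mul_comm k 2, pow_mul, ← mul_pow]; norm_num
        calc (tf p (A k) z).re ^ 2 = 16 ^ k * ((1/4:ℝ) ^ k * (tf p (A k) z).re) ^ 2 := by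
              rw [mul_pow, ← mul_assoc, h5, one_mul]
          _ ≤ _ := mul_le_mul_of_nonneg_left h4 h16.le
      have h2 := (hA2 k).le.trans h1
      rw [ENNReal.ofReal_mul h16.le, ENNReal.ofReal_natCast] at h2
      exact (ENNReal.mul_le_mul_iff_right (by simp) ENNReal.ofReal_ne_top).1 h2
    obtain ⟨n, hn⟩ := ENNReal.exists_nat_gt hM't.ne
    exact absurd (hall n) (not_le.2 hn)
  obtain ⟨N, hNt, hN⟩ := hUb
  obtain ⟨C, hC, hF⟩ := lemF s hs0 hs1
  have hpp : 1 / p' = 1 - 1 / p := by linarith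
  have hbound : ∀ a ∈ ball (0:ℂ) 1, ENNReal.ofReal (LL a ^ (2 * (1 / p'))) * QI s g a ≤
      2 * N + 2 * (C * (M * CD)) := by
    intro a ha
    have ha := mem_ball_zero_iff.1 ha
    have hL := LL_pos a ha
    have hphi : Measurable fun z : ℂ => ‖phi a z‖ := by
      unfold phi; fun_prop
    have htm : Measurable fun z : ℂ => (tf p a z).re := by
      simp only [tf_re]; fun_prop
    rw [QI, ← lintegral_const_mul' _ _ ENNReal.ofReal_ne_top]
    calc _ ≤ ∫⁻ z in ball (0:ℂ) 1,
          (2 * ENNReal.ofReal ((tf p a z).re ^ 2 * (‖deriv g z‖ ^ 2 * (1 - ‖phi a z‖ ^ 2) ^ s)) +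
           2 * ENNReal.ofReal (‖tf p a z - tf p a a‖ ^ 2 * (‖deriv g z‖ ^ 2 * (1 - ‖phi a z‖ ^ 2) ^ s))) ∂dA := by
          apply setLIntegral_mono' measurableSet_ball
          intro z hz
          have hz := mem_ball_zero_iff.1 hz
          have hpp2 := one_sub_phi_pos a z ha hz
          rw [show (2:ℝ≥0∞) = ENNReal.ofReal 2 by simp, ← ENNReal.ofReal_mul (by positivity),
            ← ENNReal.ofReal_mul (by positivity), ← ENNReal.ofReal_mul (by norm_num),
            ← ENNReal.ofReal_add (by positivity) (by positivity)]
          apply ENNReal.ofReal_le_ofReal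
          have h2 : 0 ≤ ‖deriv g z‖ ^ 2 * (1 - ‖phi a z‖ ^ 2) ^ s := by positivity
          have h3 : LL a ^ (2 * (1 / p')) ≤ (tf p a a).re ^ 2 := by
            rw [hpp, mul_comm, Real.rpow_mul hL.le, Real.rpow_two]
            exact pow_le_pow_left₀ (by positivity) (tf_re_self p a ha) 2
          have h4 : |(tf p a z - tf p a a).re| ≤ ‖tf p a z - tf p a a‖ := Complex.abs_re_le_norm _
          have h5 : (tf p a z - tf p a a).re ^ 2 ≤ ‖tf p a z - tf p a a‖ ^ 2 := by
            rw [← sq_abs]; exact pow_le_pow_left₀ (abs_nonneg _) h4 2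
          rw [Complex.sub_re] at h5
          have h6 : LL a ^ (2 * (1 / p')) ≤ 2 * (tf p a z).re ^ 2 + 2 * ‖tf p a z - tf p a a‖ ^ 2 := by
            nlinarith [sq_nonneg (2 * (tf p a z).re - (tf p a a).re)]
          nlinarith
      _ = 2 * U a + 2 * ∫⁻ z in ball (0:ℂ) 1,
           ENNReal.ofReal (‖tf p a z - tf p a a‖ ^ 2 * (‖deriv g z‖ ^ 2 * (1 - ‖phi a z‖ ^ 2) ^ s)) ∂dA := by
          rw [lintegral_add_left (by fun_prop), lintegral_const_mul' _ _ (by simp),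
            lintegral_const_mul' _ _ (by simp)]
      _ ≤ _ := by
          refine add_le_add (mul_le_mul' le_rfl (hN a ha)) (mul_le_mul' le_rfl ?_)
          refine (hF (tf p a) g (tf_hol p a ha) M hQ a ha).trans ?_
          exact mul_le_mul' le_rfl (mul_le_mul' le_rfl (hDir a ha))
  refine ⟨hg, lt_of_le_of_lt (iSup₂_le hbound) ?_⟩
  refine ENNReal.add_lt_top.2 ⟨ENNReal.mul_lt_top (by simp) hNt.lt_top, ?_⟩
  exact ENNReal.mul_lt_top (by simp) (ENNReal.mul_lt_top hC.lt_top (ENNReal.mul_lt_top hMt hCD.lt_top))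

end Helpers

/-- For `1 < p ≤ 2`, `0 < s < 1`, `p'` the conjugate exponent of `p`, and
`g` holomorphic on the unit disc: (i) if `T_g` maps `Bᵖ` into `Q_s`, then
`g ∈ Q_{s,log,1/p'}`; (ii) if `α > 1/2` and `g ∈ Q_{s,log,α}`, then `T_g` maps `Bᵖ`
into `Q_s`. -/
theorem stmt9 (p p' s : ℝ) (hp1 : 1 < p) (hp2 : p ≤ 2) (hpp' : 1 / p + 1 / p' = 1)
    (hs0 : 0 < s) (hs1 : s < 1) (g : ℂ → ℂ) (hg : HolOn g) :
    (MapsInto (Tg g) (Besov p) (Qs s) → g ∈ QsLog s (1 / p')) ∧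
    (∀ α : ℝ, 1 / 2 < α → g ∈ QsLog s α → MapsInto (Tg g) (Besov p) (Qs s)) := by
  exact ⟨part_one p p' s hp1 hp2 hpp' hs0 hs1 g hg,
    fun α hα hgq => part_two p s hp1 hp2 hs0 hs1 g hg α hα hgq⟩
end

section
/- Let g be holomorphic on the unit disc D and suppose either (1 < p ≤ 2 and 0 < s ≤ 1) or (2 < p < ∞ and 1 − 2/p < s ≤ 1). Then the operator I_g maps the Besov space B^p into Q_s if and only if g ∈ H^∞. -/
open MeasureTheory Metric Complex Real Filter Set

lemma aux_dA (S : Set ℂ) (f : ℂ → ENNReal) :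
    ∫⁻ z in S, f z ∂dA = (ENNReal.ofReal π)⁻¹ * ∫⁻ z in S, f z := by
  unfold dA
  rw [Measure.restrict_smul, lintegral_smul_measure, smul_eq_mul]

lemma aux_dA_lt_top (S : Set ℂ) (f : ℂ → ENNReal) :
    ∫⁻ z in S, f z ∂dA < ⊤ ↔ ∫⁻ z in S, f z < ⊤ := by
  rw [aux_dA]
  have h1 : (ENNReal.ofReal π)⁻¹ ≠ 0 := by simp
  have h2 : (ENNReal.ofReal π)⁻¹ ≠ ⊤ := by simp [Real.pi_pos]
  constructor
  · intro h
    exact ENNReal.lt_top_of_mul_ne_top_right h.ne h1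
  · intro h
    exact ENNReal.mul_lt_top h2.lt_top h

lemma aux_Ig_hasDerivAt {g f : ℂ → ℂ} (hg : HolOn g) (hf : HolOn f) {z : ℂ}
    (hz : z ∈ ball (0:ℂ) 1) : HasDerivAt (Ig g f) (g z * deriv f z) z := by
  have hF : DifferentiableOn ℂ (fun w => g w * deriv f w) (ball (0:ℂ) 1) :=
    DifferentiableOn.mul hg (DifferentiableOn.deriv hf isOpen_ball)
  obtain ⟨G, hG⟩ := hF.isExactOn_ball
  have key : ∀ w ∈ ball (0:ℂ) 1, Ig g f w = G w - G 0 := by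
    intro w hw
    have hmem : ∀ t ∈ uIcc (0:ℝ) 1, (t:ℂ) * w ∈ ball (0:ℂ) 1 := by
      intro t ht
      rw [uIcc_of_le zero_le_one] at ht
      simp only [mem_ball_zero_iff, norm_mul, Complex.norm_real, Real.norm_eq_abs,
        abs_of_nonneg ht.1] at hw ⊢
      nlinarith [norm_nonneg w, ht.1, ht.2]
    have hd : ∀ t ∈ uIcc (0:ℝ) 1, HasDerivAt (fun t : ℝ => G ((t:ℂ) * w))
        (g ((t:ℂ) * w) * deriv f ((t:ℂ) * w) * w) t := by
      intro t ht
      have h1 := hG _ (hmem t ht)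
      have h2 : HasDerivAt (fun t : ℝ => (t:ℂ) * w) w t := by
        simpa using (Complex.ofRealCLM.hasDerivAt (x := t)).mul_const w
      exact h1.comp t h2
    have hc : ContinuousOn (fun t : ℝ => g ((t:ℂ) * w) * deriv f ((t:ℂ) * w) * w)
        (uIcc (0:ℝ) 1) := by
      refine ContinuousOn.mul ?_ continuousOn_const
      exact hF.continuousOn.comp (by fun_prop) hmem
    have := intervalIntegral.integral_eq_sub_of_hasDerivAt hd hc.intervalIntegrable
    rw [intervalIntegral.integral_mul_const] at this
    simp only [Complex.ofReal_one, one_mul, Complex.ofReal_zero, zero_mul] at this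
    rw [← this, Ig, mul_comm]
  have := (hG z hz).sub_const (G 0)
  refine this.congr_of_eventuallyEq ?_
  filter_upwards [isOpen_ball.mem_nhds hz] with w hw using key w hw

lemma aux_jensen {α : Type*} [MeasurableSpace α] (μ : Measure α) (f : α → ENNReal)
    (hf : AEMeasurable f μ) {q : ℝ} (hq : 1 ≤ q) :
    (∫⁻ x, f x ∂μ) ^ q ≤ μ univ ^ (q - 1) * ∫⁻ x, f x ^ q ∂μ := by
  rcases hq.eq_or_lt with rfl | hq
  · simp
  have hc : q.HolderConjugate (q / (q - 1)) := Real.HolderConjugate.conjExponent hq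
  have h := ENNReal.lintegral_mul_le_Lp_mul_Lq μ hc hf (g := fun _ => 1) aemeasurable_const
  simp only [Pi.mul_apply, mul_one, ENNReal.one_rpow, lintegral_one] at h
  have h0 : 0 < q := by linarith
  calc _ ≤ _ := ENNReal.rpow_le_rpow h h0.le
    _ = _ := by
      rw [ENNReal.mul_rpow_of_nonneg _ _ h0.le, ← ENNReal.rpow_mul, ← ENNReal.rpow_mul, mul_comm]
      congr 2
      · have : q - 1 ≠ 0 := by linarith
        field_simp
      · rw [one_div_mul_cancel h0.ne', ENNReal.rpow_one]

lemma aux_polar (h : ℂ → ENNReal) (hm : Measurable h) :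
    ∫⁻ z, h z = ∫⁻ ρ in Ioi (0:ℝ), ∫⁻ θ in Ioo (-π) π,
      ENNReal.ofReal ρ * h (circleMap 0 ρ θ) := by
  rw [← Complex.lintegral_comp_polarCoord_symm, _root_.polarCoord_target,
    Measure.volume_eq_prod, ← Measure.prod_restrict, lintegral_prod]
  · simp only [smul_eq_mul, Complex.polarCoord_symm_apply, circleMap, zero_add,
      Complex.exp_mul_I, Complex.ofReal_cos, Complex.ofReal_sin]
  · have : Continuous (fun p : ℝ × ℝ => Complex.polarCoord.symm p) := by
      simp only [Complex.polarCoord_symm_apply]; fun_prop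
    simp only [smul_eq_mul]
    exact ((ENNReal.measurable_ofReal.comp measurable_fst).mul
      (hm.comp this.measurable)).aemeasurable

lemma aux_circle {F : ℂ → ℂ} {b : ℂ} {r ρ : ℝ} (hF : DifferentiableOn ℂ F (ball b r))
    (h0 : 0 < ρ) (hr : ρ < r) :
    ∫⁻ _θ in Ioo (-π) π, ‖F b‖ₑ ≤ ∫⁻ θ in Ioo (-π) π, ‖F (b + circleMap 0 ρ θ)‖ₑ := by
  have h1 : DiffContOnCl ℂ F (ball b |ρ|) := by
    refine DifferentiableOn.diffContOnCl (hF.mono ?_)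
    rw [abs_of_pos h0]
    exact closure_ball_subset_closedBall.trans (closedBall_subset_ball hr)
  have h2 := h1.circleAverage
  rw [Real.circleAverage_eq_integral_add (-π),
    intervalIntegral.integral_comp_add_right (fun θ => F (circleMap b ρ θ))] at h2
  have e1 : (0:ℝ) + -π = -π := by ring
  have e2 : 2 * π + -π = π := by ring
  rw [e1, e2, intervalIntegral.integral_of_le (by linarith [Real.pi_pos]),
    integral_Ioc_eq_integral_Ioo] at h2
  have h3 : ‖F b‖ₑ ≤ ENNReal.ofReal (2 * π)⁻¹ *
      ∫⁻ θ in Ioo (-π) π, ‖F (circleMap b ρ θ)‖ₑ := by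
    rw [← h2, enorm_smul, Real.enorm_eq_ofReal (by positivity)]
    gcongr
    exact enorm_integral_le_lintegral_enorm _
  have h4 : ∀ θ, b + circleMap 0 ρ θ = circleMap b ρ θ := by
    intro θ; simp [circleMap]
  simp only [h4]
  rw [setLIntegral_const, Real.volume_Ioo]
  calc _ ≤ _ := mul_le_mul_left h3 _
    _ = _ := by
      rw [mul_comm, ← mul_assoc, ← ENNReal.ofReal_mul (by linarith [Real.pi_pos])]
      have : (π - -π) * (2 * π)⁻¹ = 1 := by field_simp; ring
      rw [this]; simp

lemma aux_submean1 {F : ℂ → ℂ} (hm : Measurable F) {b : ℂ} {r : ℝ}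
    (hF : DifferentiableOn ℂ F (ball b r)) :
    ‖F b‖ₑ * volume (ball b r) ≤ ∫⁻ z in ball b r, ‖F z‖ₑ := by
  have e : ∀ G : ℂ → ENNReal, ∫⁻ z in ball b r, G z
      = ∫⁻ w, (ball (0:ℂ) r).indicator (fun w => G (b + w)) w := by
    intro G
    rw [← lintegral_indicator measurableSet_ball, ← lintegral_add_left_eq_self _ b]
    congr 1
    ext w
    simp only [indicator, mem_ball, dist_eq_norm, add_sub_cancel_left, sub_zero]
  rw [← setLIntegral_const, e, e, aux_polar _ (by measurability), aux_polar]
  · refine setLIntegral_mono' measurableSet_Ioi ?_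
    intro ρ hρ
    have hρ : 0 < ρ := hρ
    rw [lintegral_const_mul', lintegral_const_mul'] <;> try exact ENNReal.ofReal_ne_top
    refine mul_le_mul' le_rfl ?_
    by_cases h : ρ < r
    · have : ∀ θ, circleMap 0 ρ θ ∈ ball (0:ℂ) r := by
        intro θ; simp [abs_of_pos hρ, h]
      simp only [indicator_of_mem (this _)]
      exact aux_circle hF hρ h
    · have : ∀ θ, circleMap 0 ρ θ ∉ ball (0:ℂ) r := by
        intro θ; simp [abs_of_pos hρ]; linarith
      simp only [indicator_of_notMem (this _)]
      exact le_rfl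
  · refine Measurable.indicator ?_ measurableSet_ball
    exact (hm.comp (measurable_const_add b)).enorm

lemma aux_submean {F : ℂ → ℂ} (hm : Measurable F) {b : ℂ} {r : ℝ} (hr : 0 < r)
    (hF : DifferentiableOn ℂ F (ball b r)) {q : ℝ} (hq : 1 ≤ q) :
    ‖F b‖ₑ ^ q * volume (ball b r) ≤ ∫⁻ z in ball b r, ‖F z‖ₑ ^ q := by
  have h1 := aux_submean1 hm hF
  have h2 := aux_jensen (volume.restrict (ball b r)) (fun z => ‖F z‖ₑ)
    hm.enorm.aemeasurable hq
  rw [Measure.restrict_apply_univ] at h2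
  set V := volume (ball b r) with hV
  have hV0 : V ≠ 0 := (measure_ball_pos _ _ hr).ne'
  have hVt : V ≠ ⊤ := measure_ball_lt_top.ne
  have h3 : (‖F b‖ₑ * V) ^ q ≤ V ^ (q - 1) * ∫⁻ z in ball b r, ‖F z‖ₑ ^ q :=
    (ENNReal.rpow_le_rpow h1 (by linarith)).trans h2
  rw [ENNReal.mul_rpow_of_nonneg _ _ (by linarith)] at h3
  have h4 : V ^ q = V ^ (q - 1) * V := by
    conv_lhs => rw [show q = (q - 1) + 1 by ring, ENNReal.rpow_add _ _ hV0 hVt, ENNReal.rpow_one]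
  rw [h4, mul_left_comm] at h3
  exact (ENNReal.mul_le_mul_iff_right (ENNReal.rpow_pos (pos_iff_ne_zero.2 hV0) hVt).ne'
    (ENNReal.rpow_ne_top_of_nonneg (by linarith) hVt)).1 h3

lemma aux_den {a z : ℂ} (ha : ‖a‖ < 1) (hz : ‖z‖ < 1) : 1 - (starRingEnd ℂ) a * z ≠ 0 := by
  intro h
  have h1 : (starRingEnd ℂ) a * z = 1 := (sub_eq_zero.1 h).symm
  have h2 : ‖a‖ * ‖z‖ = 1 := by
    have := congrArg norm h1
    simpa using this
  nlinarith [norm_nonneg a, norm_nonneg z]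

lemma aux_phi_id {a z : ℂ} (ha : ‖a‖ < 1) (hz : ‖z‖ < 1) :
    1 - ‖phi a z‖ ^ 2 = (1 - ‖a‖ ^ 2) * (1 - ‖z‖ ^ 2) / ‖1 - (starRingEnd ℂ) a * z‖ ^ 2 := by
  have h := norm_pos_iff.2 (aux_den ha hz)
  rw [phi, norm_div, div_pow, eq_div_iff (by positivity), sub_mul, one_mul,
    div_mul_cancel₀ _ (by positivity)]
  simp only [← Complex.normSq_eq_norm_sq, Complex.normSq_apply]
  simp
  ring

lemma aux_one_sub_sq_pos {z : ℂ} (hz : ‖z‖ < 1) : 0 < 1 - ‖z‖ ^ 2 := by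
  nlinarith [norm_nonneg z]

lemma aux_phi_pos {a z : ℂ} (ha : ‖a‖ < 1) (hz : ‖z‖ < 1) : 0 < 1 - ‖phi a z‖ ^ 2 := by
  rw [aux_phi_id ha hz]
  have h := norm_pos_iff.2 (aux_den ha hz)
  have := aux_one_sub_sq_pos ha
  have := aux_one_sub_sq_pos hz
  positivity

lemma aux_phi_lt {a z : ℂ} (ha : ‖a‖ < 1) (hz : ‖z‖ < 1) : ‖phi a z‖ < 1 := by
  have := aux_phi_pos ha hz
  nlinarith [norm_nonneg (phi a z)]

lemma aux_phi_deriv {a z : ℂ} (ha : ‖a‖ < 1) (hz : ‖z‖ < 1) :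
    HasDerivAt (phi a) (-(1 - (‖a‖:ℂ) ^ 2) / (1 - (starRingEnd ℂ) a * z) ^ 2) z := by
  have h1 : HasDerivAt (fun z => a - z) (-1) z := by
    simpa using (hasDerivAt_id z).const_sub a
  have h2 : HasDerivAt (fun z => 1 - (starRingEnd ℂ) a * z) (-(starRingEnd ℂ) a) z := by
    simpa using ((hasDerivAt_id z).const_mul ((starRingEnd ℂ) a)).const_sub 1
  have h3 := h1.div h2 (aux_den ha hz)
  refine HasDerivAt.congr_deriv h3 ?_
  congr 1
  have : (‖a‖:ℂ) ^ 2 = (starRingEnd ℂ) a * a := by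
    rw [Complex.conj_mul']
  rw [this]
  ring

lemma aux_phi_norm_deriv {a z : ℂ} (ha : ‖a‖ < 1) (hz : ‖z‖ < 1) :
    ‖deriv (phi a) z‖ = (1 - ‖phi a z‖ ^ 2) / (1 - ‖z‖ ^ 2) := by
  rw [(aux_phi_deriv ha hz).deriv, aux_phi_id ha hz, norm_div, norm_neg, norm_pow]
  have h1 := aux_one_sub_sq_pos ha
  have h2 := aux_one_sub_sq_pos hz
  have : ‖(1 - (‖a‖:ℂ) ^ 2)‖ = 1 - ‖a‖ ^ 2 := by
    rw [← Complex.ofReal_pow, ← Complex.ofReal_one, ← Complex.ofReal_sub, Complex.norm_real,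
      Real.norm_of_nonneg h1.le]
  rw [this]
  field_simp

lemma aux_phi_inj {a : ℂ} (ha : ‖a‖ < 1) : InjOn (phi a) (ball (0:ℂ) 1) := by
  intro z hz w hw h
  rw [mem_ball_zero_iff] at hz hw
  simp only [phi] at h
  rw [div_eq_div_iff (aux_den ha hz) (aux_den ha hw)] at h
  have h1 := aux_den ha ha
  have h2 : (1 - (starRingEnd ℂ) a * a) * (z - w) = 0 := by linear_combination -h
  exact sub_eq_zero.1 ((mul_eq_zero.1 h2).resolve_left h1)

lemma aux_radial {t : ℝ} (ht : 1 < t) :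
    ∫⁻ w in ball (0:ℂ) 1, ENNReal.ofReal ((1 - ‖w‖ ^ 2) ^ (t - 2)) < ⊤ := by
  have key : IntegrableOn (fun y : ℝ => y * (1 - y ^ 2) ^ (t - 2)) (Ioo 0 1) := by
    have h := intervalIntegral.integrableOn_deriv_of_nonneg (a := 0) (b := 1)
      (g := fun y : ℝ => -(1 - y ^ 2) ^ (t - 1) / (2 * (t - 1)))
      (g' := fun y : ℝ => y * (1 - y ^ 2) ^ (t - 2)) ?_ ?_ ?_
    · exact h.mono_set Ioo_subset_Ioc_self
    · refine ContinuousOn.div_const (ContinuousOn.neg ?_) _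
      refine ContinuousOn.rpow_const (by fun_prop) ?_
      intro x _; right; linarith
    · intro x hx
      have hx1 : 0 < 1 - x ^ 2 := by nlinarith [hx.1, hx.2]
      have h1 : HasDerivAt (fun y : ℝ => 1 - y ^ 2) (-(2 * x)) x := by
        simpa using (hasDerivAt_pow 2 x).const_sub 1
      have h2 := ((h1.rpow_const (p := t - 1) (Or.inl hx1.ne')).neg).div_const (2 * (t - 1))
      refine h2.congr_deriv ?_
      have : t - 1 ≠ 0 := by linarith
      rw [show t - 1 - 1 = t - 2 by ring]
      field_simp
    · intro x hx
      have hx1 : 0 < 1 - x ^ 2 := by nlinarith [hx.1, hx.2]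
      have := hx.1
      positivity
  have h2 : IntegrableOn (fun w : ℂ => (1 - ‖w‖ ^ 2) ^ (t - 2)) (ball (0:ℂ) 1) := by
    rw [integrableOn_fun_norm_addHaar volume (f := fun y : ℝ => (1 - y ^ 2) ^ (t - 2))]
    simpa using key
  have h3 := h2.lintegral_lt_top
  exact h3

lemma aux_det (c : ℂ) :
    |((ContinuousLinearMap.toSpanSingleton ℂ c).restrictScalars ℝ : ℂ →L[ℝ] ℂ).det| = ‖c‖ ^ 2 := by
  simp [ContinuousLinearMap.det, LinearMap.det_restrictScalars, Algebra.norm_complex_apply, 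
    Complex.normSq_eq_norm_sq]

lemma aux_conf {t : ℝ} {a : ℂ} (ha : ‖a‖ < 1) :
    ∫⁻ z in ball (0:ℂ) 1, ENNReal.ofReal ((1 - ‖z‖ ^ 2) ^ (-2 : ℝ) * (1 - ‖phi a z‖ ^ 2) ^ t) ≤
    ∫⁻ w in ball (0:ℂ) 1, ENNReal.ofReal ((1 - ‖w‖ ^ 2) ^ (t - 2)) := by
  have hsub : phi a '' ball (0:ℂ) 1 ⊆ ball (0:ℂ) 1 := by
    rintro _ ⟨z, hz, rfl⟩
    rw [mem_ball_zero_iff] at hz ⊢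
    exact aux_phi_lt ha hz
  refine le_trans (le_of_eq ?_) (lintegral_mono_set hsub)
  rw [lintegral_image_eq_lintegral_abs_det_fderiv_mul volume measurableSet_ball
    (f' := fun z => (ContinuousLinearMap.toSpanSingleton ℂ (deriv (phi a) z)).restrictScalars ℝ)
    _ (aux_phi_inj ha)]
  · refine setLIntegral_congr_fun measurableSet_ball ?_
    intro z hz
    rw [mem_ball_zero_iff] at hz
    have h1 := aux_phi_pos ha hz
    have h2 := aux_one_sub_sq_pos hz
    simp only
    rw [aux_det, ← ENNReal.ofReal_mul (by positivity), aux_phi_norm_deriv ha hz, div_pow,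
      Real.rpow_sub h1, Real.rpow_neg h2.le, Real.rpow_ofNat, Real.rpow_ofNat]
    congr 1
    field_simp
  · intro z hz
    rw [mem_ball_zero_iff] at hz
    have h := (aux_phi_deriv ha hz)
    rw [← h.deriv] at h
    exact (h.hasFDerivAt.restrictScalars ℝ).hasFDerivWithinAt

lemma aux_local {F : ℂ → ℂ} (hm : Measurable F) (hF : DifferentiableOn ℂ F (ball (0:ℂ) 1))
    {b : ℂ} (hb : ‖b‖ < 1) {q : ℝ} (hq : 1 ≤ q) {k : ℂ → ℝ} {κ : ℝ} (hκ : 0 ≤ κ)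
    (hk : ∀ z ∈ ball b ((1 - ‖b‖) / 2), κ ≤ k z) {I : ℝ} (hI0 : 0 ≤ I)
    (hI : ∫⁻ z in ball (0:ℂ) 1, ENNReal.ofReal (‖F z‖ ^ q * k z) ≤ ENNReal.ofReal I) :
    κ * (‖F b‖ ^ q * (π * ((1 - ‖b‖) / 2) ^ 2)) ≤ I := by
  set r := (1 - ‖b‖) / 2 with hr
  have hr0 : 0 < r := by rw [hr]; linarith
  have hsub : ball b r ⊆ ball (0:ℂ) 1 := by
    intro z hz
    rw [mem_ball_zero_iff]
    rw [mem_ball, dist_eq_norm] at hz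
    have := norm_add_le b (z - b)
    rw [add_sub_cancel] at this
    linarith
  have h1 := aux_submean hm hr0 (hF.mono hsub) hq
  have h2 : ENNReal.ofReal (κ * (‖F b‖ ^ q * (π * r ^ 2))) ≤ ENNReal.ofReal I := by
    calc ENNReal.ofReal (κ * (‖F b‖ ^ q * (π * r ^ 2)))
        = ENNReal.ofReal κ * (‖F b‖ₑ ^ q * volume (ball b r)) := by
          rw [ENNReal.ofReal_mul hκ, ENNReal.ofReal_mul (by positivity),
            ← ENNReal.ofReal_rpow_of_nonneg (norm_nonneg _) (by linarith),
            ofReal_norm, Complex.volume_ball, mul_comm π,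
            ENNReal.ofReal_mul (by positivity), ENNReal.ofReal_pow hr0.le]
          congr 3
          rw [← NNReal.coe_real_pi, ENNReal.ofReal_coe_nnreal]
      _ ≤ ENNReal.ofReal κ * ∫⁻ z in ball b r, ‖F z‖ₑ ^ q := by gcongr
      _ = ∫⁻ z in ball b r, ENNReal.ofReal κ * ‖F z‖ₑ ^ q := by
          rw [lintegral_const_mul' _ _ ENNReal.ofReal_ne_top]
      _ ≤ ∫⁻ z in ball b r, ENNReal.ofReal (‖F z‖ ^ q * k z) := by
          refine setLIntegral_mono' measurableSet_ball ?_
          intro z hz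
          rw [mul_comm, ENNReal.ofReal_mul (by positivity),
            ← ENNReal.ofReal_rpow_of_nonneg (norm_nonneg _) (by linarith),
            ofReal_norm]
          gcongr
          exact hk z hz
      _ ≤ ∫⁻ z in ball (0:ℂ) 1, ENNReal.ofReal (‖F z‖ ^ q * k z) := lintegral_mono_set hsub
      _ ≤ _ := hI
  exact (ENNReal.ofReal_le_ofReal_iff hI0).1 h2

lemma aux_local_norm {b z : ℂ} (hz : z ∈ ball b ((1 - ‖b‖) / 2)) :
    (1 - ‖b‖) / 2 ≤ 1 - ‖z‖ ∧ 1 - ‖z‖ ≤ 3 * ((1 - ‖b‖) / 2) := by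
  rw [mem_ball, dist_eq_norm] at hz
  have h1 := norm_add_le b (z - b)
  rw [add_sub_cancel] at h1
  have h2 := norm_sub_norm_le b z
  rw [norm_sub_rev] at h2
  constructor <;> linarith

lemma aux_local_phi {b z : ℂ} (hb : ‖b‖ < 1) (hz : z ∈ ball b ((1 - ‖b‖) / 2)) :
    2 / 25 ≤ 1 - ‖phi b z‖ ^ 2 := by
  have h1 := (aux_local_norm hz).1
  have hz1 : ‖z‖ < 1 := by linarith
  rw [aux_phi_id hb hz1]
  have hd := norm_pos_iff.2 (aux_den hb hz1)
  rw [mem_ball, dist_eq_norm] at hz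
  have hd2 : ‖1 - (starRingEnd ℂ) b * z‖ ≤ 5 / 2 * (1 - ‖b‖) := by
    have e : 1 - (starRingEnd ℂ) b * z = ((1 - ‖b‖ ^ 2 : ℝ) : ℂ) - (starRingEnd ℂ) b * (z - b) := by
      push_cast
      rw [← Complex.conj_mul']
      ring
    rw [e]
    refine (norm_sub_le _ _).trans ?_
    rw [Complex.norm_real, Real.norm_of_nonneg (aux_one_sub_sq_pos hb).le, norm_mul,
      RCLike.norm_conj]
    nlinarith [norm_nonneg b, norm_nonneg (z - b)]
  rw [le_div_iff₀ (by positivity)]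
  have hd3 : ‖1 - (starRingEnd ℂ) b * z‖ ^ 2 ≤ (5 / 2 * (1 - ‖b‖)) ^ 2 := by gcongr
  have h3 : (1 - ‖b‖) ≤ 1 - ‖b‖ ^ 2 := by nlinarith [norm_nonneg b]
  have h4 : (1 - ‖b‖) / 2 ≤ 1 - ‖z‖ ^ 2 := by nlinarith [norm_nonneg z]
  have h5 : (1 - ‖b‖) * ((1 - ‖b‖) / 2) ≤ (1 - ‖b‖ ^ 2) * (1 - ‖z‖ ^ 2) := by
    apply mul_le_mul h3 h4 <;> linarith
  nlinarith

lemma aux_Qs_bound {s : ℝ} {h : ℂ → ℂ} (hh : h ∈ Qs s) :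
    ∃ I : ℝ, 0 ≤ I ∧ ∀ a ∈ ball (0:ℂ) 1, ∫⁻ z in ball (0:ℂ) 1,
      ENNReal.ofReal (‖deriv h z‖ ^ 2 * (1 - ‖phi a z‖ ^ 2) ^ s) ≤ ENNReal.ofReal I := by
  obtain ⟨-, hS⟩ := hh
  set S := ⨆ a ∈ Metric.ball (0:ℂ) 1, ∫⁻ z in Metric.ball (0:ℂ) 1,
      ENNReal.ofReal (‖deriv h z‖ ^ 2 * (1 - ‖phi a z‖ ^ 2) ^ s) ∂dA with hSd
  have hp : ENNReal.ofReal π ≠ 0 := by simp [Real.pi_pos]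
  have hT : ENNReal.ofReal π * S < ⊤ := ENNReal.mul_lt_top ENNReal.ofReal_lt_top hS
  refine ⟨(ENNReal.ofReal π * S).toReal, ENNReal.toReal_nonneg, ?_⟩
  intro a ha
  rw [ENNReal.ofReal_toReal hT.ne]
  have h1 : ∫⁻ z in Metric.ball (0:ℂ) 1,
      ENNReal.ofReal (‖deriv h z‖ ^ 2 * (1 - ‖phi a z‖ ^ 2) ^ s) ∂dA ≤ S :=
    le_iSup₂_of_le a ha le_rfl
  rw [aux_dA] at h1
  calc _ = ENNReal.ofReal π * ((ENNReal.ofReal π)⁻¹ * ∫⁻ z in ball (0:ℂ) 1,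
      ENNReal.ofReal (‖deriv h z‖ ^ 2 * (1 - ‖phi a z‖ ^ 2) ^ s)) := by
        rw [← mul_assoc, ENNReal.mul_inv_cancel hp ENNReal.ofReal_ne_top, one_mul]
    _ ≤ _ := by gcongr

lemma aux_Qs_bloch {s : ℝ} (hs : 0 < s) {h : ℂ → ℂ} (hh : h ∈ Qs s) :
    ∃ M : ℝ, ∀ b ∈ ball (0:ℂ) 1, (1 - ‖b‖ ^ 2) * ‖deriv h b‖ ≤ M := by
  obtain ⟨I, hI0, hI⟩ := aux_Qs_bound hh
  have hhol : DifferentiableOn ℂ h (ball (0:ℂ) 1) := hh.1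
  have hκ : 0 < (2 / 25 : ℝ) ^ s := by positivity
  refine ⟨4 * √(I / ((2 / 25 : ℝ) ^ s * π)), ?_⟩
  intro b hb
  have hb1 : ‖b‖ < 1 := by simpa using hb
  have key := aux_local (measurable_deriv h) (hhol.deriv isOpen_ball) hb1 (q := 2) one_le_two
    (k := fun z => (1 - ‖phi b z‖ ^ 2) ^ s) (κ := (2 / 25 : ℝ) ^ s) hκ.le
    (fun z hz => Real.rpow_le_rpow (by norm_num) (aux_local_phi hb1 hz) hs.le) hI0
    (by simpa only [Real.rpow_ofNat] using hI b hb)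
  rw [Real.rpow_ofNat] at key
  have h1 : (1 - ‖b‖) / 2 * ‖deriv h b‖ ≤ √(I / ((2 / 25 : ℝ) ^ s * π)) := by
    apply Real.le_sqrt_of_sq_le
    rw [le_div_iff₀ (by positivity)]
    calc _ = _ := by ring
      _ ≤ I := key
  have h2 : 1 - ‖b‖ ^ 2 ≤ 4 * ((1 - ‖b‖) / 2) := by nlinarith [norm_nonneg b]
  calc _ ≤ 4 * ((1 - ‖b‖) / 2) * ‖deriv h b‖ := by gcongr
    _ ≤ _ := by linarith

lemma aux_suff_le_two {p s : ℝ} (hp1 : 1 < p) (hp2 : p ≤ 2) (hs : 0 < s) {f : ℂ → ℂ}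
    (hf : f ∈ Besov p) : ∃ C : ENNReal, C < ⊤ ∧ ∀ a ∈ ball (0:ℂ) 1, ∫⁻ z in ball (0:ℂ) 1,
      ENNReal.ofReal (‖deriv f z‖ ^ 2 * (1 - ‖phi a z‖ ^ 2) ^ s) ≤ C := by
  obtain ⟨hhol, hfin⟩ := hf
  have hhol : DifferentiableOn ℂ f (ball (0:ℂ) 1) := hhol
  rw [aux_dA_lt_top] at hfin
  set J := ∫⁻ z in ball (0:ℂ) 1, ENNReal.ofReal ((1 - ‖z‖) ^ (p - 2) * ‖deriv f z‖ ^ p) with hJ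
  set I := J.toReal with hIdef
  have hI0 : 0 ≤ I := ENNReal.toReal_nonneg
  set M := 2 * (I / (π * (3:ℝ) ^ (p - 2))) ^ (1 / p) with hM
  have hM0 : 0 ≤ M := by positivity
  have hbloch : ∀ z ∈ ball (0:ℂ) 1, (1 - ‖z‖) * ‖deriv f z‖ ≤ M := by
    intro b hb
    have hb1 : ‖b‖ < 1 := by simpa using hb
    have hr : 0 < (1 - ‖b‖) / 2 := by linarith
    have key := aux_local (measurable_deriv f) (hhol.deriv isOpen_ball) hb1 (q := p) hp1.le
      (k := fun z => (1 - ‖z‖) ^ (p - 2)) (κ := (3 * ((1 - ‖b‖) / 2)) ^ (p - 2)) (by positivity)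
      (fun z hz => Real.rpow_le_rpow_of_nonpos (by linarith [(aux_local_norm hz).1])
        (aux_local_norm hz).2 (by linarith)) hI0
      (by
        rw [hIdef, ENNReal.ofReal_toReal hfin.ne, hJ]
        simp only [mul_comm]
        exact le_rfl)
    set r := (1 - ‖b‖) / 2 with hrd
    have h1 : (r * ‖deriv f b‖) ^ p ≤ I / (π * (3:ℝ) ^ (p - 2)) := by
      rw [le_div_iff₀ (by positivity), Real.mul_rpow hr.le (norm_nonneg _)]
      rw [Real.mul_rpow (by norm_num) hr.le] at key
      have e : r ^ p = r ^ (p - 2) * r ^ 2 := by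
        rw [← Real.rpow_natCast, ← Real.rpow_add hr]; norm_num
      rw [e]
      calc _ = _ := by ring
        _ ≤ I := key
    have h2 : r * ‖deriv f b‖ ≤ (I / (π * (3:ℝ) ^ (p - 2))) ^ (1 / p) := by
      rw [one_div]
      exact (Real.le_rpow_inv_iff_of_pos (by positivity) (by positivity) (by linarith)).2 h1
    have h3 : 1 - ‖b‖ = 2 * r := by rw [hrd]; ring
    rw [h3, hM]
    linarith
  refine ⟨ENNReal.ofReal (M ^ (2 - p)) * J, ENNReal.mul_lt_top ENNReal.ofReal_lt_top hfin, ?_⟩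
  intro a ha
  have ha1 : ‖a‖ < 1 := by simpa using ha
  rw [hJ, ← lintegral_const_mul' _ _ ENNReal.ofReal_ne_top]
  refine setLIntegral_mono' measurableSet_ball ?_
  intro z hz
  have hz1 : ‖z‖ < 1 := by simpa using hz
  rw [← ENNReal.ofReal_mul (by positivity)]
  apply ENNReal.ofReal_le_ofReal
  have hr : 0 < 1 - ‖z‖ := by linarith
  have h1 : (1 - ‖phi a z‖ ^ 2) ^ s ≤ 1 :=
    Real.rpow_le_one (aux_phi_pos ha1 hz1).le (by nlinarith [norm_nonneg (phi a z)]) hs.le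
  have h2 : ((1 - ‖z‖) * ‖deriv f z‖) ^ (2 - p) ≤ M ^ (2 - p) :=
    Real.rpow_le_rpow (by positivity) (hbloch z hz) (by linarith)
  have h3 : ‖deriv f z‖ ^ 2 = ((1 - ‖z‖) * ‖deriv f z‖) ^ (2 - p) *
      ((1 - ‖z‖) ^ (p - 2) * ‖deriv f z‖ ^ p) := by
    rw [Real.mul_rpow hr.le (norm_nonneg _)]
    have e1 : (1 - ‖z‖) ^ (2 - p) * (1 - ‖z‖) ^ (p - 2) = 1 := by
      rw [← Real.rpow_add hr]; simp
    have e2 : ‖deriv f z‖ ^ (2 - p) * ‖deriv f z‖ ^ p = ‖deriv f z‖ ^ 2 := by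
      rw [← Real.rpow_add' (norm_nonneg _) (by simp)]; simp
    rw [← e2]
    linear_combination (-(‖deriv f z‖ ^ (2 - p) * ‖deriv f z‖ ^ p)) * e1
  calc _ ≤ ‖deriv f z‖ ^ 2 * 1 := by gcongr
    _ = _ := by rw [mul_one, h3]
    _ ≤ _ := by gcongr

lemma aux_suff_gt_two {p s : ℝ} (hp2 : 2 < p) (hs : 1 - 2 / p < s) {f : ℂ → ℂ}
    (hf : f ∈ Besov p) : ∃ C : ENNReal, C < ⊤ ∧ ∀ a ∈ ball (0:ℂ) 1, ∫⁻ z in ball (0:ℂ) 1,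
      ENNReal.ofReal (‖deriv f z‖ ^ 2 * (1 - ‖phi a z‖ ^ 2) ^ s) ≤ C := by
  obtain ⟨hhol, hfin⟩ := hf
  rw [aux_dA_lt_top] at hfin
  have hp0 : 0 < p := by linarith
  have hpm : 0 < p - 2 := by linarith
  set P := p / 2 with hP
  set Q := p / (p - 2) with hQ
  have hP1 : 1 < P := by rw [hP]; linarith
  have hQ0 : 0 < Q := by positivity
  have hconj : P.HolderConjugate Q := by
    have := Real.HolderConjugate.conjExponent hP1
    convert this using 1
    rw [Real.conjExponent, hP, hQ]; field_simp
  have ht : 1 < s * Q := by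
    rw [hQ, ← mul_div_assoc, lt_div_iff₀ hpm]
    have : (1 - 2 / p) * p = p - 2 := by field_simp
    nlinarith
  set K := ∫⁻ w in ball (0:ℂ) 1, ENNReal.ofReal ((1 - ‖w‖ ^ 2) ^ (s * Q - 2)) with hK
  have hKt : K < ⊤ := aux_radial ht
  set J := ∫⁻ z in ball (0:ℂ) 1, ENNReal.ofReal ((1 - ‖z‖) ^ (p - 2) * ‖deriv f z‖ ^ p) with hJ
  refine ⟨J ^ (1 / P) * (ENNReal.ofReal 4 * K) ^ (1 / Q), ?_, ?_⟩
  · refine ENNReal.mul_lt_top ?_ ?_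
    · exact ENNReal.rpow_lt_top_of_nonneg (by positivity) hfin.ne
    · exact ENNReal.rpow_lt_top_of_nonneg (by positivity)
        (ENNReal.mul_lt_top ENNReal.ofReal_lt_top hKt).ne
  intro a ha
  have ha1 : ‖a‖ < 1 := by simpa using ha
  have hmphi : Measurable (phi a) := by
    unfold phi; fun_prop
  have hol := ENNReal.lintegral_mul_le_Lp_mul_Lq (volume.restrict (ball (0:ℂ) 1)) hconj
    (f := fun z => ENNReal.ofReal (‖deriv f z‖ ^ 2 * (1 - ‖z‖) ^ (2 / Q)))
    (g := fun z => ENNReal.ofReal ((1 - ‖z‖) ^ (-2 / Q) * (1 - ‖phi a z‖ ^ 2) ^ s))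
    (by
      have := measurable_deriv f
      refine Measurable.aemeasurable ?_
      fun_prop)
    (by
      refine Measurable.aemeasurable ?_
      fun_prop)
  refine le_trans (le_of_eq ?_) (hol.trans ?_)
  · refine setLIntegral_congr_fun measurableSet_ball ?_
    intro z hz
    have hz1 : ‖z‖ < 1 := by simpa using hz
    have hr : 0 < 1 - ‖z‖ := by linarith
    simp only [Pi.mul_apply]
    rw [← ENNReal.ofReal_mul (by positivity)]
    congr 1
    have e1 : (1 - ‖z‖) ^ (2 / Q) * (1 - ‖z‖) ^ (-2 / Q) = 1 := by
      rw [← Real.rpow_add hr, ← add_div]; simp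
    linear_combination (-(‖deriv f z‖ ^ 2 * (1 - ‖phi a z‖ ^ 2) ^ s)) * e1
  · gcongr ?_ ^ _ * ?_ ^ _
    · refine le_of_eq (setLIntegral_congr_fun measurableSet_ball ?_)
      intro z hz
      have hz1 : ‖z‖ < 1 := by simpa using hz
      have hr : 0 < 1 - ‖z‖ := by linarith
      simp only
      rw [ENNReal.ofReal_rpow_of_nonneg (by positivity) (by positivity),
        Real.mul_rpow (by positivity) (by positivity), ← Real.rpow_natCast, ← Real.rpow_mul
        (norm_nonneg _), ← Real.rpow_mul hr.le, mul_comm]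
      congr 3
      · rw [hP, hQ]; field_simp
      · rw [hP]; push_cast; ring
    · refine le_trans ?_ (mul_le_mul' le_rfl (aux_conf (t := s * Q) ha1))
      rw [← lintegral_const_mul' _ _ ENNReal.ofReal_ne_top]
      refine setLIntegral_mono' measurableSet_ball ?_
      intro z hz
      have hz1 : ‖z‖ < 1 := by simpa using hz
      have hr : 0 < 1 - ‖z‖ := by linarith
      have h1 := aux_phi_pos ha1 hz1
      have h2 := aux_one_sub_sq_pos hz1
      rw [← ENNReal.ofReal_mul (by positivity), ENNReal.ofReal_rpow_of_nonneg (by positivity)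
        (by positivity)]
      apply ENNReal.ofReal_le_ofReal
      rw [Real.mul_rpow (by positivity) (by positivity), ← Real.rpow_mul hr.le,
        ← Real.rpow_mul h1.le, ← mul_assoc]
      gcongr
      rw [div_mul_cancel₀ _ hQ0.ne', Real.rpow_neg hr.le, Real.rpow_neg h2.le, Real.rpow_ofNat,
        Real.rpow_ofNat, ← div_eq_mul_inv, inv_le_comm₀ (by positivity) (by positivity), inv_div,
        div_le_iff₀ (by norm_num)]
      have : 1 - ‖z‖ ^ 2 ≤ 2 * (1 - ‖z‖) := by nlinarith [norm_nonneg z]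
      nlinarith

lemma aux_phi_besov {p : ℝ} (hp : 1 < p) {a : ℂ} (ha : ‖a‖ < 1) :
    ∫⁻ z in ball (0:ℂ) 1, ENNReal.ofReal ((1 - ‖z‖) ^ (p - 2)) * ‖deriv (phi a) z‖ₑ ^ p ≤
      ENNReal.ofReal 4 *
        ∫⁻ w in ball (0:ℂ) 1, ENNReal.ofReal ((1 - ‖w‖ ^ 2) ^ (p - 2)) := by
  refine le_trans ?_ (mul_le_mul' le_rfl (aux_conf (t := p) ha))
  rw [← lintegral_const_mul' _ _ ENNReal.ofReal_ne_top]
  refine setLIntegral_mono' measurableSet_ball ?_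
  intro z hz
  have hz1 : ‖z‖ < 1 := by simpa using hz
  have hr : 0 < 1 - ‖z‖ := by linarith
  have h1 := aux_phi_pos ha hz1
  have h2 := aux_one_sub_sq_pos hz1
  rw [← ENNReal.ofReal_mul (by positivity), ← ofReal_norm,
    ENNReal.ofReal_rpow_of_nonneg (norm_nonneg _) (by linarith),
    ← ENNReal.ofReal_mul (by positivity)]
  apply ENNReal.ofReal_le_ofReal
  rw [aux_phi_norm_deriv ha hz1, Real.div_rpow h1.le h2.le, Real.rpow_sub hr,
    Real.rpow_neg h2.le, Real.rpow_ofNat, Real.rpow_ofNat]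
  have h3 : (1 - ‖z‖) ^ p ≤ (1 - ‖z‖ ^ 2) ^ p :=
    Real.rpow_le_rpow hr.le (by nlinarith [norm_nonneg z]) (by linarith)
  have h4 : (1 - ‖z‖ ^ 2) ^ 2 ≤ 4 * (1 - ‖z‖) ^ 2 := by
    have : 1 - ‖z‖ ^ 2 ≤ 2 * (1 - ‖z‖) := by nlinarith [norm_nonneg z]
    nlinarith
  have h5 : 0 < (1 - ‖z‖ ^ 2) ^ p := by positivity
  have h6 : 0 < (1 - ‖phi a z‖ ^ 2) ^ p := by positivity
  rw [div_mul_div_comm, ← mul_assoc, ← div_eq_mul_inv, div_mul_eq_mul_div,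
    div_le_div_iff₀ (by positivity) (by positivity)]
  calc (1 - ‖z‖) ^ p * (1 - ‖phi a z‖ ^ 2) ^ p * (1 - ‖z‖ ^ 2) ^ 2
      ≤ (1 - ‖z‖ ^ 2) ^ p * (1 - ‖phi a z‖ ^ 2) ^ p * (4 * (1 - ‖z‖) ^ 2) := by gcongr
    _ = _ := by ring

lemma aux_jensen_tsum (c x : ℕ → ENNReal) {q : ℝ} (hq : 1 ≤ q) :
    (∑' n, c n * x n) ^ q ≤ (∑' n, c n) ^ (q - 1) * ∑' n, c n * x n ^ q := by
  have h := aux_jensen (Measure.sum (fun n => c n • Measure.dirac n)) x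
    (measurable_of_countable x).aemeasurable hq
  simpa [lintegral_sum_measure, lintegral_smul_measure] using h

lemma aux_series {p : ℝ} (hp : 1 < p) {c : ℕ → ℂ} (hc : Summable (fun n => ‖c n‖))
    {b : ℕ → ℂ} (hb : ∀ n, ‖b n‖ < 1) :
    ∃ f ∈ Besov p, ∀ z ∈ ball (0:ℂ) 1, deriv f z = ∑' n, c n * deriv (phi (b n)) z := by
  have hd : ∀ n, DifferentiableOn ℂ (fun z => c n * phi (b n) z) (ball (0:ℂ) 1) := by
    intro n z hz
    have hz1 : ‖z‖ < 1 := by simpa using hz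
    exact ((aux_phi_deriv (hb n) hz1).differentiableAt.const_mul (c n)).differentiableWithinAt
  have hbd : ∀ n, ∀ z ∈ ball (0:ℂ) 1, ‖c n * phi (b n) z‖ ≤ ‖c n‖ := by
    intro n z hz
    have hz1 : ‖z‖ < 1 := by simpa using hz
    rw [norm_mul]
    exact mul_le_of_le_one_right (norm_nonneg _) (aux_phi_lt (hb n) hz1).le
  set f : ℂ → ℂ := fun z => ∑' n, c n * phi (b n) z with hf
  have hderiv : ∀ z ∈ ball (0:ℂ) 1,
      HasSum (fun n => c n * deriv (phi (b n)) z) (deriv f z) := by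
    intro z hz
    have hz1 : ‖z‖ < 1 := by simpa using hz
    have h := Complex.hasSum_deriv_of_summable_norm hc hd isOpen_ball hbd hz
    have e : (fun n => c n * deriv (phi (b n)) z)
        = fun n => deriv (fun z => c n * phi (b n) z) z := by
      ext n
      exact (deriv_const_mul _ (aux_phi_deriv (hb n) hz1).differentiableAt).symm
    rw [e]
    exact h
  refine ⟨f, ⟨Complex.differentiableOn_tsum_of_summable_norm hc hd isOpen_ball hbd, ?_⟩,
    fun z hz => (hderiv z hz).tsum_eq.symm⟩
  rw [aux_dA_lt_top]
  set A : ENNReal := ∑' n, ‖c n‖ₑ with hA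
  have hAt : A ≠ ⊤ := by
    have : A = ENNReal.ofReal (∑' n, ‖c n‖) := by
      rw [ENNReal.ofReal_tsum_of_nonneg (fun _ => norm_nonneg _) hc]
      simp only [ofReal_norm, hA]
    rw [this]; exact ENNReal.ofReal_ne_top
  set K := ∫⁻ w in ball (0:ℂ) 1, ENNReal.ofReal ((1 - ‖w‖ ^ 2) ^ (p - 2)) with hK
  have hKt : K < ⊤ := aux_radial hp
  have hAp : A ^ (p - 1) ≠ ⊤ := ENNReal.rpow_ne_top_of_nonneg (by linarith) hAt
  have hfin : A ^ (p - 1) * (A * (ENNReal.ofReal 4 * K)) < ⊤ :=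
    ENNReal.mul_lt_top hAp.lt_top (ENNReal.mul_lt_top hAt.lt_top
      (ENNReal.mul_lt_top ENNReal.ofReal_lt_top hKt))
  refine lt_of_le_of_lt ?_ hfin
  calc _ ≤ ∫⁻ z in ball (0:ℂ) 1, A ^ (p - 1) * ∑' n, ‖c n‖ₑ *
        (ENNReal.ofReal ((1 - ‖z‖) ^ (p - 2)) * ‖deriv (phi (b n)) z‖ₑ ^ p) := by
        refine setLIntegral_mono' measurableSet_ball ?_
        intro z hz
        have hz1 : ‖z‖ < 1 := by simpa using hz
        have hr : 0 < 1 - ‖z‖ := by linarith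
        rw [ENNReal.ofReal_mul (by positivity),
          ← ENNReal.ofReal_rpow_of_nonneg (norm_nonneg _) (by linarith), ofReal_norm]
        have h1 : ‖deriv f z‖ₑ ≤ ∑' n, ‖c n‖ₑ * ‖deriv (phi (b n)) z‖ₑ := by
          rw [← (hderiv z hz).tsum_eq]
          refine (enorm_tsum_le_tsum_enorm).trans (le_of_eq ?_)
          simp only [enorm_mul]
        have h2 := (ENNReal.rpow_le_rpow h1 (by linarith : 0 ≤ p)).trans
          (aux_jensen_tsum _ _ hp.le)
        refine (mul_le_mul' le_rfl h2).trans (le_of_eq ?_)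
        rw [mul_left_comm, ← ENNReal.tsum_mul_left]
        congr 2
        ext n
        ring
    _ = A ^ (p - 1) * ∑' n, ‖c n‖ₑ * ∫⁻ z in ball (0:ℂ) 1,
        (ENNReal.ofReal ((1 - ‖z‖) ^ (p - 2)) * ‖deriv (phi (b n)) z‖ₑ ^ p) := by
        rw [lintegral_const_mul' _ _ hAp, lintegral_tsum]
        · congr 2
          ext n
          rw [lintegral_const_mul' _ _ enorm_ne_top]
        · intro n
          have := measurable_deriv (phi (b n))
          refine Measurable.aemeasurable ?_
          fun_prop
    _ ≤ A ^ (p - 1) * ∑' n, ‖c n‖ₑ * (ENNReal.ofReal 4 * K) := by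
        gcongr with n
        exact aux_phi_besov hp (hb n)
    _ = _ := by rw [ENNReal.tsum_mul_right]

lemma aux_lp_summable (x : lp (fun _ : ℕ => ℂ) 1) : Summable (fun n => ‖x n‖) := by
  have := (lp.memℓp x).summable (by simp)
  simpa using this

lemma aux_functional (w : ℕ → ℂ) (hw : ∀ n, ‖w n‖ ≤ 1) :
    ∃ L : lp (fun _ : ℕ => ℂ) 1 →L[ℂ] ℂ, ∀ x, L x = ∑' n, x n * w n := by
  have hle : ∀ (x : lp (fun _ : ℕ => ℂ) 1) n, ‖x n * w n‖ ≤ ‖x n‖ := by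
    intro x n
    rw [norm_mul]
    exact mul_le_of_le_one_right (norm_nonneg _) (hw n)
  have hs : ∀ x : lp (fun _ : ℕ => ℂ) 1, Summable (fun n => x n * w n) := fun x =>
    Summable.of_norm_bounded (aux_lp_summable x) (hle x)
  refine ⟨LinearMap.mkContinuous
    { toFun := fun x => ∑' n, x n * w n
      map_add' := ?_
      map_smul' := ?_ } 1 ?_, fun x => rfl⟩
  · intro x y
    rw [← (hs x).tsum_add (hs y)]
    congr 1
    ext n
    simp [add_mul]
  · intro k x
    simp only [RingHom.id_apply, smul_eq_mul]
    rw [← tsum_mul_left]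
    congr 1
    ext n
    simp [mul_assoc]
  · intro x
    simp only [LinearMap.coe_mk, AddHom.coe_mk, one_mul]
    refine (tsum_of_norm_bounded (aux_lp_summable x).hasSum (hle x)).trans (le_of_eq ?_)
    rw [lp.norm_eq_tsum_rpow (by simp)]
    simp

lemma aux_phi_deriv_bound {a z : ℂ} (ha : ‖a‖ < 1) (hz : ‖z‖ < 1) :
    (1 - ‖z‖ ^ 2) * ‖deriv (phi a) z‖ ≤ 1 := by
  have h2 := aux_one_sub_sq_pos hz
  rw [aux_phi_norm_deriv ha hz, mul_div_cancel₀ _ h2.ne']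
  nlinarith [norm_nonneg (phi a z)]

lemma aux_necessity {p s : ℝ} (hp : 1 < p) (hs : 0 < s) {g : ℂ → ℂ} (hg : HolOn g)
    (h : MapsInto (Ig g) (Besov p) (Qs s)) : g ∈ Hinf := by
  refine ⟨hg, ?_⟩
  by_contra hcon
  push Not at hcon
  have hcon' : ∀ n : ℕ, ∃ z ∈ ball (0:ℂ) 1, (n:ℝ) < ‖g z‖ := fun n => hcon n
  choose b hb hgb using hcon'
  have hb1 : ∀ n, ‖b n‖ < 1 := fun n => by simpa using hb n
  have hw : ∀ m n, ‖((1 - ‖b m‖ ^ 2 : ℝ) : ℂ) * deriv (phi (b n)) (b m)‖ ≤ 1 := by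
    intro m n
    rw [norm_mul, Complex.norm_real, Real.norm_of_nonneg (aux_one_sub_sq_pos (hb1 m)).le]
    exact aux_phi_deriv_bound (hb1 n) (hb1 m)
  choose L hL using fun m => aux_functional _ (hw m)
  have hbs : ∃ C', ∀ m, ‖g (b m) • L m‖ ≤ C' := by
    refine banach_steinhaus ?_
    intro x
    obtain ⟨f, hf, hfd⟩ := aux_series hp (aux_lp_summable x) hb1
    obtain ⟨M, hM⟩ := aux_Qs_bloch hs (h f hf)
    refine ⟨M, fun m => ?_⟩
    have h1 := hM (b m) (hb m)
    rw [(aux_Ig_hasDerivAt hg hf.1 (hb m)).deriv, hfd _ (hb m)] at h1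
    refine le_trans (le_of_eq ?_) h1
    rw [_root_.smul_apply, hL, smul_eq_mul, norm_mul, norm_mul]
    have e : ∑' n, x n * (((1 - ‖b m‖ ^ 2 : ℝ) : ℂ) * deriv (phi (b n)) (b m))
        = ((1 - ‖b m‖ ^ 2 : ℝ) : ℂ) * ∑' n, x n * deriv (phi (b n)) (b m) := by
      rw [← tsum_mul_left]
      congr 1
      ext n
      ring
    rw [e, norm_mul, Complex.norm_real, Real.norm_of_nonneg (aux_one_sub_sq_pos (hb1 m)).le]
    ring
  obtain ⟨C, hC⟩ := hbs
  obtain ⟨m, hm⟩ := exists_nat_gt C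
  have h1 := (g (b m) • L m).le_opNorm (lp.single 1 m (1:ℂ))
  rw [lp.norm_single (by simp)] at h1
  rw [_root_.smul_apply, hL, tsum_eq_single m, lp.single_apply_self] at h1
  · have e : phi (b m) (b m) = 0 := by simp [phi]
    have h2 := aux_one_sub_sq_pos (hb1 m)
    rw [smul_eq_mul, norm_mul, one_mul, norm_mul, Complex.norm_real, Real.norm_of_nonneg h2.le,
      aux_phi_norm_deriv (hb1 m) (hb1 m), mul_div_cancel₀ _ h2.ne', e] at h1
    have h3 := hC m
    have h4 := hgb m
    simp only [norm_zero, norm_one] at h1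
    linarith
  · intro n hn
    rw [lp.single_apply_ne _ _ _ hn, zero_mul]

lemma aux_sufficiency {p s : ℝ} {g : ℂ → ℂ} (hg : g ∈ Hinf)
    (hps : (1 < p ∧ p ≤ 2 ∧ 0 < s ∧ s ≤ 1) ∨ (2 < p ∧ 1 - 2 / p < s ∧ s ≤ 1)) :
    MapsInto (Ig g) (Besov p) (Qs s) := by
  intro f hf
  obtain ⟨hgh, B, hB⟩ := hg
  have hd := fun z (hz : z ∈ ball (0:ℂ) 1) => aux_Ig_hasDerivAt hgh hf.1 hz
  obtain ⟨C, hCt, hC⟩ : ∃ C : ENNReal, C < ⊤ ∧ ∀ a ∈ ball (0:ℂ) 1, ∫⁻ z in ball (0:ℂ) 1,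
      ENNReal.ofReal (‖deriv f z‖ ^ 2 * (1 - ‖phi a z‖ ^ 2) ^ s) ≤ C := by
    rcases hps with ⟨h1, h2, h3, _⟩ | ⟨h1, h2, _⟩
    · exact aux_suff_le_two h1 h2 h3 hf
    · exact aux_suff_gt_two h1 h2 hf
  refine ⟨fun z hz => (hd z hz).differentiableAt.differentiableWithinAt, ?_⟩
  have hfin : (ENNReal.ofReal π)⁻¹ * (ENNReal.ofReal (B ^ 2) * C) < ⊤ := by
    refine ENNReal.mul_lt_top ?_ (ENNReal.mul_lt_top ENNReal.ofReal_lt_top hCt)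
    simp [Real.pi_pos]
  refine lt_of_le_of_lt (iSup₂_le fun a ha => ?_) hfin
  rw [aux_dA]
  refine mul_le_mul' le_rfl (le_trans ?_ (mul_le_mul' le_rfl (hC a ha)))
  rw [← lintegral_const_mul' _ _ ENNReal.ofReal_ne_top]
  refine setLIntegral_mono' measurableSet_ball ?_
  intro z hz
  have hz1 : ‖z‖ < 1 := by simpa using hz
  have ha1 : ‖a‖ < 1 := by simpa using ha
  have h1 := aux_phi_pos ha1 hz1
  rw [← ENNReal.ofReal_mul (by positivity)]
  apply ENNReal.ofReal_le_ofReal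
  rw [(hd z hz).deriv, norm_mul, mul_pow, mul_assoc]
  have := hB z hz
  gcongr

/-- For `g` holomorphic on the unit disc and `(1 < p ≤ 2` and `0 < s ≤ 1)`
or `(2 < p < ∞` and `1 - 2/p < s ≤ 1)`: `I_g` maps `Bᵖ` into `Q_s` iff `g ∈ H^∞`. -/
theorem stmt10 (p s : ℝ) (g : ℂ → ℂ) (hg : HolOn g)
    (hps : (1 < p ∧ p ≤ 2 ∧ 0 < s ∧ s ≤ 1) ∨ (2 < p ∧ 1 - 2 / p < s ∧ s ≤ 1)) :
    MapsInto (Ig g) (Besov p) (Qs s) ↔ g ∈ Hinf := by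
  refine ⟨fun h => ?_, fun h => aux_sufficiency h hps⟩
  rcases hps with ⟨h1, _, h3, _⟩ | ⟨h1, h2, _⟩
  · exact aux_necessity h1 h3 hg h
  · refine aux_necessity (by linarith) ?_ hg h
    have : 2 / p < 1 := by rw [div_lt_one (by linarith)]; exact h1
    linarith
end
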